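/- There exists a constant C > 0 depending only on the nonlinearity g (and not on Ω or on the flow u) with the following property: if τ is C² in Ω, continuous on the closure of Ω, solves −Δτ + ⟨u, ∇τ⟩ = 1 in Ω with τ = 0 on ∂Ω, and θ_u denotes the maximum of τ over the closure of Ω, then for every λ ∈ (0, C/θ_u] the explosion problem at parameter λ admits a minimal nonnegative classical solution. -/

import Mathlib

open Set MeasureTheory
open scoped RealInnerProductSpace

noncomputable section

/-- The Laplacian of a real-valued function on Euclidean space, computed as the sum of
the second partial derivatives in the coordinate directions. -/
def lapl {n : ℕ} (φ : EuclideanSpace ℝ (Fin n) → ℝ) (x : EuclideanSpace ℝ (Fin n)) : ℝ :=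
  ∑ i : Fin n, fderiv ℝ (fun y => fderiv ℝ φ y (EuclideanSpace.single i 1)) x
    (EuclideanSpace.single i 1)

/-- The divergence of a vector field on Euclidean space. -/
def dvg {n : ℕ} (u : EuclideanSpace ℝ (Fin n) → EuclideanSpace ℝ (Fin n))
    (x : EuclideanSpace ℝ (Fin n)) : ℝ :=
  ∑ i : Fin n, fderiv ℝ (fun y => u y i) x (EuclideanSpace.single i 1)

/-- A classical solution of the explosion problem `-Δφ + ⟨u, ∇φ⟩ = λ g(φ)` in `Ω`,
vanishing on `∂Ω`: `C²` in `Ω`, continuous on the closure of `Ω`. -/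
def IsClassicalSol {n : ℕ} (Ω : Set (EuclideanSpace ℝ (Fin n)))
    (u : EuclideanSpace ℝ (Fin n) → EuclideanSpace ℝ (Fin n)) (g : ℝ → ℝ) (lam : ℝ)
    (φ : EuclideanSpace ℝ (Fin n) → ℝ) : Prop :=
  (∀ x ∈ Ω, ContDiffAt ℝ 2 φ x) ∧ ContinuousOn φ (closure Ω) ∧
  (∀ x ∈ Ω, -lapl φ x + ⟪u x, gradient φ x⟫ = lam * g (φ x)) ∧
  (∀ x ∈ frontier Ω, φ x = 0)

/-- A nonnegative classical solution. -/
def IsNonnegSol {n : ℕ} (Ω : Set (EuclideanSpace ℝ (Fin n)))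
    (u : EuclideanSpace ℝ (Fin n) → EuclideanSpace ℝ (Fin n)) (g : ℝ → ℝ) (lam : ℝ)
    (φ : EuclideanSpace ℝ (Fin n) → ℝ) : Prop :=
  IsClassicalSol Ω u g lam φ ∧ ∀ x ∈ Ω, 0 ≤ φ x

/-- A minimal nonnegative classical solution: one that lies below every nonnegative
classical solution at the same parameter. -/
def IsMinimalSol {n : ℕ} (Ω : Set (EuclideanSpace ℝ (Fin n)))
    (u : EuclideanSpace ℝ (Fin n) → EuclideanSpace ℝ (Fin n)) (g : ℝ → ℝ) (lam : ℝ)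
    (φ : EuclideanSpace ℝ (Fin n) → ℝ) : Prop :=
  IsNonnegSol Ω u g lam φ ∧ ∀ v, IsNonnegSol Ω u g lam v → ∀ x ∈ Ω, φ x ≤ v x

open Filter Topology
open scoped ContDiff

/-- Euclidean space. -/
abbrev ES (n : ℕ) := EuclideanSpace ℝ (Fin n)

/-- Partial derivative. -/
def pd {n : ℕ} (i : Fin n) (f : ES n → ℝ) (x : ES n) : ℝ :=
  fderiv ℝ f x (EuclideanSpace.single i 1)

lemma lapl_eq {n : ℕ} (f : ES n → ℝ) (x : ES n) : lapl f x = ∑ i, pd i (pd i f) x := rfl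

lemma vec_eq_sum {n : ℕ} (v : ES n) : v = ∑ i, v i • (EuclideanSpace.single i (1:ℝ) : ES n) := by
  ext j
  simp [Finset.sum_apply, Pi.single_apply]

lemma fderiv_eq_sum {n : ℕ} (f : ES n → ℝ) (x v : ES n) :
    fderiv ℝ f x v = ∑ i, v i * pd i f x := by
  conv_lhs => rw [vec_eq_sum v]
  simp [map_sum, pd]

lemma inner_grad {n : ℕ} (f : ES n → ℝ) (x v : ES n) :
    ⟪v, gradient f x⟫ = fderiv ℝ f x v := by
  rw [real_inner_comm, inner_gradient_left]

lemma pd_contDiffAt {n : ℕ} {f : ES n → ℝ} {x : ES n} {k m : WithTop ℕ∞} (i : Fin n)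
    (hf : ContDiffAt ℝ k f x) (h : m + 1 ≤ k) : ContDiffAt ℝ m (pd i f) x := by
  unfold pd
  exact (hf.fderiv_right h).clm_apply contDiffAt_const

lemma pd_contDiff {n : ℕ} {f : ES n → ℝ} (i : Fin n)
    (hf : ContDiff ℝ ∞ f) : ContDiff ℝ ∞ (pd i f) := by
  unfold pd
  exact (hf.fderiv_right (m := ∞) (by simp)).clm_apply contDiff_const

lemma pd_congr {n : ℕ} {f g : ES n → ℝ} {x : ES n} (i : Fin n) (h : f =ᶠ[𝓝 x] g) :
    pd i f x = pd i g x := by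
  unfold pd; rw [h.fderiv_eq]

lemma lapl_congr {n : ℕ} {f g : ES n → ℝ} {x : ES n} (h : f =ᶠ[𝓝 x] g) :
    lapl f x = lapl g x := by
  rw [lapl_eq, lapl_eq]
  refine Finset.sum_congr rfl fun i _ => pd_congr i ?_
  filter_upwards [h.eventuallyEq_nhds] with y hy using pd_congr i hy

lemma pd_add {n : ℕ} {f g : ES n → ℝ} {x : ES n} (i : Fin n) (hf : DifferentiableAt ℝ f x)
    (hg : DifferentiableAt ℝ g x) : pd i (fun y => f y + g y) x = pd i f x + pd i g x := by
  unfold pd; rw [fderiv_fun_add hf hg]; rfl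

lemma pd_const_mul {n : ℕ} {f : ES n → ℝ} {x : ES n} (i : Fin n) (c : ℝ)
    (hf : DifferentiableAt ℝ f x) : pd i (fun y => c * f y) x = c * pd i f x := by
  unfold pd; rw [fderiv_const_mul hf]; rfl

lemma pd_mul {n : ℕ} {f g : ES n → ℝ} {x : ES n} (i : Fin n) (hf : DifferentiableAt ℝ f x)
    (hg : DifferentiableAt ℝ g x) :
    pd i (fun y => f y * g y) x = f x * pd i g x + pd i f x * g x := by
  unfold pd; rw [fderiv_fun_mul hf hg]; simp [mul_comm]

lemma cda_eventually {n : ℕ} {f : ES n → ℝ} {x : ES n} (hf : ContDiffAt ℝ 2 f x) :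
    ∀ᶠ y in 𝓝 x, DifferentiableAt ℝ f y := by
  filter_upwards [hf.eventually (by simp)] with y hy using hy.differentiableAt (by simp)

lemma lapl_add {n : ℕ} {f g : ES n → ℝ} {x : ES n} (hf : ContDiffAt ℝ 2 f x)
    (hg : ContDiffAt ℝ 2 g x) : lapl (fun y => f y + g y) x = lapl f x + lapl g x := by
  rw [lapl_eq, lapl_eq, lapl_eq, ← Finset.sum_add_distrib]
  refine Finset.sum_congr rfl fun i _ => ?_
  rw [← pd_add i ((pd_contDiffAt (m := 1) i hf (by norm_num)).differentiableAt (by simp))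
    ((pd_contDiffAt (m := 1) i hg (by norm_num)).differentiableAt (by simp))]
  apply pd_congr
  filter_upwards [cda_eventually hf, cda_eventually hg] with y h1 h2 using pd_add i h1 h2

lemma lapl_const_mul {n : ℕ} {f : ES n → ℝ} {x : ES n} (c : ℝ) (hf : ContDiffAt ℝ 2 f x) :
    lapl (fun y => c * f y) x = c * lapl f x := by
  rw [lapl_eq, lapl_eq, Finset.mul_sum]
  refine Finset.sum_congr rfl fun i _ => ?_
  rw [← pd_const_mul i c ((pd_contDiffAt (m := 1) i hf (by norm_num)).differentiableAt (by simp))]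
  apply pd_congr
  filter_upwards [cda_eventually hf] with y h1 using pd_const_mul i c h1

lemma second_deriv_nonneg {f : ℝ → ℝ} {a : ℝ} (hf : ContinuousAt f a) (hm : IsLocalMin f a) :
    0 ≤ deriv (deriv f) a := by
  by_contra! h
  have h1 := isLocalMax_of_deriv_deriv_neg h hm.deriv_eq_zero hf
  have h2 : f =ᶠ[𝓝 a] fun _ => f a := by
    filter_upwards [hm, h1] with y h1 h2 using le_antisymm h2 h1
  have h3 := h2.deriv.deriv_eq
  simp at h3
  linarith

lemma lapl_nonneg_of_isLocalMin {n : ℕ} {f : ES n → ℝ} {x : ES n} (hf : ContDiffAt ℝ 2 f x)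
    (hm : IsLocalMin f x) : 0 ≤ lapl f x := by
  rw [lapl_eq]
  refine Finset.sum_nonneg fun i _ => ?_
  set v : ES n := EuclideanSpace.single i 1 with hv
  set c : ℝ → ES n := fun s => x + s • v with hc
  have hc0 : c 0 = x := by simp [hc]
  have hcc : Continuous c := by fun_prop
  have hct : Tendsto c (𝓝 0) (𝓝 x) := by rw [← hc0]; exact hcc.tendsto 0
  have hcd : ∀ s, HasDerivAt c v s := by
    intro s
    have := ((hasDerivAt_id s).smul_const v).const_add x
    rw [one_smul] at this
    exact this
  have key : ∀ (g : ES n → ℝ) (s : ℝ), DifferentiableAt ℝ g (c s) →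
      HasDerivAt (fun s => g (c s)) (pd i g (c s)) s := by
    intro g s hg
    exact hg.hasFDerivAt.comp_hasDerivAt s (hcd s)
  have h1 : deriv (fun s => f (c s)) =ᶠ[𝓝 0] fun s => pd i f (c s) := by
    filter_upwards [hct.eventually (cda_eventually hf)] with s hs using (key f s hs).deriv
  have h2 : deriv (deriv (fun s => f (c s))) 0 = pd i (pd i f) x := by
    rw [h1.deriv_eq]
    have := key (pd i f) 0 (by
      rw [hc0]; exact (pd_contDiffAt (m := 1) i hf (by norm_num)).differentiableAt (by simp))
    rw [this.deriv, hc0]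
  rw [← h2]
  apply second_deriv_nonneg
  · have : ContinuousAt f (c 0) := by rw [hc0]; exact hf.continuousAt
    exact ContinuousAt.comp (f := c) this hcc.continuousAt
  · have := hct.eventually hm
    simpa [IsLocalMin, IsMinFilter, hc0] using this

lemma fderiv_add_mul {n : ℕ} {w τ : ES n → ℝ} {x : ES n} (c : ℝ) (hw : DifferentiableAt ℝ w x)
    (hτ : DifferentiableAt ℝ τ x) (v : ES n) :
    fderiv ℝ (fun y => w y + c * τ y) x v = fderiv ℝ w x v + c * fderiv ℝ τ x v := by
  rw [fderiv_fun_add hw (hτ.const_mul c), fderiv_const_mul hτ]; rfl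

/-- strict minimum principle -/
lemma min_principle_strict {n : ℕ} {Ω : Set (ES n)} (hΩ : IsOpen Ω) (hb : Bornology.IsBounded Ω)
    (u : ES n → ES n) {w : ES n → ℝ} (hw : ∀ x ∈ Ω, ContDiffAt ℝ 2 w x)
    (hwc : ContinuousOn w (closure Ω)) (hwf : ∀ x ∈ frontier Ω, 0 ≤ w x)
    (hL : ∀ x ∈ Ω, 0 < -lapl w x + fderiv ℝ w x (u x)) : ∀ x ∈ Ω, 0 ≤ w x := by
  intro x hx
  have hcomp : IsCompact (closure Ω) := hb.isCompact_closure
  obtain ⟨z, hz, hmin⟩ := hcomp.exists_isMinOn ⟨x, subset_closure hx⟩ hwc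
  have hzx : w z ≤ w x := hmin (subset_closure hx)
  by_cases hzΩ : z ∈ Ω
  · exfalso
    have hloc : IsLocalMin w z := by
      filter_upwards [hΩ.mem_nhds hzΩ] with y hy using hmin (subset_closure hy)
    have h1 := lapl_nonneg_of_isLocalMin (hw z hzΩ) hloc
    have h2 := hL z hzΩ
    rw [hloc.fderiv_eq_zero] at h2
    simp at h2; linarith
  · have : z ∈ frontier Ω := by
      rw [frontier, hΩ.interior_eq]; exact ⟨hz, hzΩ⟩
    linarith [hwf z this]

lemma min_principle {n : ℕ} {Ω : Set (ES n)} (hΩ : IsOpen Ω) (hb : Bornology.IsBounded Ω)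
    (u : ES n → ES n) {τ : ES n → ℝ} (hτ : ∀ x ∈ Ω, ContDiffAt ℝ 2 τ x)
    (hτc : ContinuousOn τ (closure Ω)) (hτf : ∀ x ∈ frontier Ω, τ x = 0)
    (hτL : ∀ x ∈ Ω, -lapl τ x + fderiv ℝ τ x (u x) = 1)
    {w : ES n → ℝ} (hw : ∀ x ∈ Ω, ContDiffAt ℝ 2 w x)
    (hwc : ContinuousOn w (closure Ω)) (hwf : ∀ x ∈ frontier Ω, 0 ≤ w x)
    (hL : ∀ x ∈ Ω, 0 ≤ -lapl w x + fderiv ℝ w x (u x)) : ∀ x ∈ Ω, 0 ≤ w x := by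
  intro x hx
  have key : ∀ ε > 0, 0 ≤ w x + ε * τ x := by
    intro ε hε
    refine min_principle_strict hΩ hb u (w := fun y => w y + ε * τ y) ?_ ?_ ?_ ?_ x hx
    · intro y hy; exact (hw y hy).add (contDiffAt_const.mul (hτ y hy))
    · exact hwc.add (continuousOn_const.mul hτc)
    · intro y hy; simpa [hτf y hy] using hwf y hy
    · intro y hy
      rw [lapl_add (hw y hy) (contDiffAt_const.mul (hτ y hy)), lapl_const_mul ε (hτ y hy),
        fderiv_add_mul ε ((hw y hy).differentiableAt (by simp)) ((hτ y hy).differentiableAt (by simp))]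
      have h1 := hL y hy
      have h2 := hτL y hy
      have : fderiv ℝ τ y (u y) = 1 + lapl τ y := by linarith
      rw [this]; linarith
  have ht : Tendsto (fun ε : ℝ => w x + ε * τ x) (𝓝[>] 0) (𝓝 (w x + 0 * τ x)) := by
    apply Tendsto.mono_left _ nhdsWithin_le_nhds
    exact Continuous.tendsto (by fun_prop) 0
  have := ge_of_tendsto ht (by filter_upwards [self_mem_nhdsWithin] with ε hε using key ε hε)
  simpa using this

/-- Test functions. -/
structure IsTest {n : ℕ} (Ω : Set (ES n)) (ψ : ES n → ℝ) : Prop where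
  smooth : ContDiff ℝ ∞ ψ
  cs : HasCompactSupport ψ
  sub : tsupport ψ ⊆ Ω

lemma tsupport_pd {n : ℕ} (i : Fin n) (ψ : ES n → ℝ) : tsupport (pd i ψ) ⊆ tsupport ψ :=
  tsupport_fderiv_apply_subset ℝ _

lemma IsTest.pd {n : ℕ} {Ω : Set (ES n)} {ψ : ES n → ℝ} (h : IsTest Ω ψ) (i : Fin n) :
    IsTest Ω (pd i ψ) where
  smooth := pd_contDiff i h.smooth
  cs := h.cs.mono' ((subset_tsupport _).trans (tsupport_pd i ψ))
  sub := (tsupport_pd i ψ).trans h.sub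

/-- continuous on `Ω` times compactly supported in `Ω` is continuous and compactly supported. -/
lemma cont_mul {n : ℕ} {Ω : Set (ES n)} (hΩ : IsOpen Ω) {f ψ : ES n → ℝ}
    (hf : ContinuousOn f Ω) (hψ : Continuous ψ) (hsub : tsupport ψ ⊆ Ω) :
    Continuous (fun x => f x * ψ x) := by
  rw [continuous_iff_continuousAt]
  intro x
  by_cases hx : x ∈ tsupport ψ
  · exact (hf.continuousAt (hΩ.mem_nhds (hsub hx))).mul hψ.continuousAt
  · have : (fun x => f x * ψ x) =ᶠ[𝓝 x] fun _ => 0 := by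
      filter_upwards [notMem_tsupport_iff_eventuallyEq.1 hx] with y hy
      simp [hy]
    exact this.continuousAt

lemma int_mul {n : ℕ} {Ω : Set (ES n)} (hΩ : IsOpen Ω) {f ψ : ES n → ℝ}
    (hf : ContinuousOn f Ω) (hψ : IsTest Ω ψ) :
    Integrable (fun x => f x * ψ x) :=
  (cont_mul hΩ hf hψ.smooth.continuous hψ.sub).integrable_of_hasCompactSupport hψ.cs.mul_left

lemma cont_of_cda {n : ℕ} {Ω : Set (ES n)} {f : ES n → ℝ} {m : WithTop ℕ∞}
    (hf : ∀ x ∈ Ω, ContDiffAt ℝ m f x) : ContinuousOn f Ω :=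
  fun x hx => (hf x hx).continuousAt.continuousWithinAt

lemma ibp {n : ℕ} {Ω : Set (ES n)} (hΩ : IsOpen Ω) {f ψ : ES n → ℝ}
    (hf : ∀ x ∈ Ω, ContDiffAt ℝ 1 f x) (hψ : IsTest Ω ψ) (i : Fin n) :
    ∫ x, f x * pd i ψ x = - ∫ x, pd i f x * ψ x := by
  refine integral_mul_fderiv_eq_neg_fderiv_mul_of_integrable ?_ ?_ ?_ ?_ ?_
  · exact int_mul hΩ (cont_of_cda (m := 0) fun x hx => pd_contDiffAt i (hf x hx) (by norm_num)) hψ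
  · exact int_mul hΩ (cont_of_cda hf) (hψ.pd i)
  · exact int_mul hΩ (cont_of_cda hf) hψ
  · intro x hx; exact (hf x (hψ.sub hx)).differentiableAt (by simp)
  · intro x _; exact hψ.smooth.differentiable (by simp) x

lemma ibp_lapl {n : ℕ} {Ω : Set (ES n)} (hΩ : IsOpen Ω) {f ψ : ES n → ℝ}
    (hf : ∀ x ∈ Ω, ContDiffAt ℝ 2 f x) (hψ : IsTest Ω ψ) :
    ∫ x, f x * lapl ψ x = ∫ x, lapl f x * ψ x := by
  simp only [lapl_eq, Finset.mul_sum, Finset.sum_mul]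
  have h1 : ∀ i : Fin n, ∀ x ∈ Ω, ContDiffAt ℝ 1 (pd i f) x := fun i x hx =>
    pd_contDiffAt i (hf x hx) (by norm_num)
  have h2 : ∀ i : Fin n, ∀ x ∈ Ω, ContDiffAt ℝ 0 (pd i (pd i f)) x := fun i x hx =>
    pd_contDiffAt i (h1 i x hx) (by norm_num)
  have h3 : ∀ x ∈ Ω, ContDiffAt ℝ 1 f x := fun x hx => (hf x hx).of_le (by norm_num)
  rw [integral_finsetSum, integral_finsetSum]
  · refine Finset.sum_congr rfl fun i _ => ?_
    rw [ibp hΩ h3 (hψ.pd i) i, ibp hΩ (h1 i) hψ i, neg_neg]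
  · intro i _; exact int_mul hΩ (cont_of_cda (h2 i)) hψ
  · intro i _; exact int_mul hΩ (cont_of_cda h3) ((hψ.pd i).pd i)

lemma cda_coord {n : ℕ} {u : ES n → ES n} {x : ES n} (hu : ContDiffAt ℝ 1 u x) (i : Fin n) :
    ContDiffAt ℝ 1 (fun y => u y i) x := (contDiffAt_euclidean.1 hu) i

lemma dvg_eq {n : ℕ} (u : ES n → ES n) (x : ES n) : dvg u x = ∑ i, pd i (fun y => u y i) x := rfl

lemma dvg_cont {n : ℕ} {Ω : Set (ES n)} {u : ES n → ES n}
    (hu : ∀ x ∈ Ω, ContDiffAt ℝ 1 u x) : ContinuousOn (dvg u) Ω := by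
  have : dvg u = fun x => ∑ i, pd i (fun y => u y i) x := rfl
  rw [this]
  refine continuousOn_finsetSum _ fun i _ => ?_
  exact cont_of_cda (m := 0) fun x hx => pd_contDiffAt i (cda_coord (hu x hx) i) (by norm_num)

lemma drift_cont {n : ℕ} {Ω : Set (ES n)} {u : ES n → ES n} {f : ES n → ℝ}
    (hu : ∀ x ∈ Ω, ContDiffAt ℝ 1 u x) (hf : ∀ x ∈ Ω, ContDiffAt ℝ 1 f x) :
    ContinuousOn (fun x => fderiv ℝ f x (u x)) Ω := by
  intro x hx
  apply ContinuousAt.continuousWithinAt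
  exact ((hf x hx).continuousAt_fderiv (by simp)).clm_apply (hu x hx).continuousAt

lemma lapl_cont {n : ℕ} {Ω : Set (ES n)} {f : ES n → ℝ}
    (hf : ∀ x ∈ Ω, ContDiffAt ℝ 2 f x) : ContinuousOn (lapl f) Ω := by
  have : lapl f = fun x => ∑ i, pd i (pd i f) x := rfl
  rw [this]
  refine continuousOn_finsetSum _ fun i _ => ?_
  exact cont_of_cda (m := 0) fun x hx =>
    pd_contDiffAt i (pd_contDiffAt (m := 1) i (hf x hx) (by norm_num)) (by norm_num)

/-- formal adjoint operator -/
def Ladj {n : ℕ} (u : ES n → ES n) (ψ : ES n → ℝ) (x : ES n) : ℝ :=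
  lapl ψ x + fderiv ℝ ψ x (u x) + dvg u x * ψ x

lemma ibp_drift {n : ℕ} {Ω : Set (ES n)} (hΩ : IsOpen Ω) {u : ES n → ES n}
    (hu : ∀ x ∈ Ω, ContDiffAt ℝ 1 u x) {f ψ : ES n → ℝ}
    (hf : ∀ x ∈ Ω, ContDiffAt ℝ 1 f x) (hψ : IsTest Ω ψ) :
    ∫ x, f x * (fderiv ℝ ψ x (u x) + dvg u x * ψ x) = - ∫ x, fderiv ℝ f x (u x) * ψ x := by
  have hfu : ∀ i : Fin n, ∀ x ∈ Ω, ContDiffAt ℝ 1 (fun y => f y * u y i) x :=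
    fun i x hx => (hf x hx).mul (cda_coord (hu x hx) i)
  have h1 : ∫ x, (∑ i, f x * u x i * pd i ψ x) =
      - ∫ x, ∑ i, pd i (fun y => f y * u y i) x * ψ x := by
    rw [integral_finsetSum, integral_finsetSum, ← Finset.sum_neg_distrib]
    · exact Finset.sum_congr rfl fun i _ => ibp hΩ (hfu i) hψ i
    · intro i _
      exact int_mul hΩ (cont_of_cda (m := 0) fun x hx => pd_contDiffAt i (hfu i x hx) (by norm_num)) hψ
    · intro i _; exact int_mul hΩ (cont_of_cda (hfu i)) (hψ.pd i)
  have h2 : ∀ x, f x * (fderiv ℝ ψ x (u x) + dvg u x * ψ x) =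
      (∑ i, f x * u x i * pd i ψ x) + (f x * dvg u x) * ψ x := by
    intro x
    rw [fderiv_eq_sum, mul_add, Finset.mul_sum]
    congr 1
    · exact Finset.sum_congr rfl fun i _ => by ring
    · ring
  have h3 : ∀ x, ∑ i, pd i (fun y => f y * u y i) x * ψ x =
      fderiv ℝ f x (u x) * ψ x + (f x * dvg u x) * ψ x := by
    intro x
    by_cases hx : x ∈ Ω
    · rw [fderiv_eq_sum, dvg_eq, Finset.mul_sum, ← add_mul, ← Finset.sum_add_distrib,
        Finset.sum_mul]
      refine Finset.sum_congr rfl fun i _ => ?_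
      rw [pd_mul i ((hf x hx).differentiableAt (by simp))
        ((cda_coord (hu x hx) i).differentiableAt (by simp))]
      ring
    · have : ψ x = 0 := image_eq_zero_of_notMem_tsupport fun h => hx (hψ.sub h)
      simp [this]
  simp only [h2]
  simp only [h3] at h1
  have i1 : Integrable (fun x => (f x * dvg u x) * ψ x) :=
    int_mul hΩ ((cont_of_cda hf).mul (dvg_cont hu)) hψ
  rw [integral_add _ i1, h1, integral_add _ i1]
  · ring
  · exact int_mul hΩ (drift_cont hu hf) hψ
  · exact integrable_finsetSum _ fun i _ => int_mul hΩ (cont_of_cda (hfu i)) (hψ.pd i)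

lemma isTest_zero_off {n : ℕ} {Ω : Set (ES n)} {ψ : ES n → ℝ} (hψ : IsTest Ω ψ) {x : ES n}
    (hx : x ∉ tsupport ψ) : ψ x = 0 ∧ fderiv ℝ ψ x = 0 ∧ lapl ψ x = 0 := by
  refine ⟨image_eq_zero_of_notMem_tsupport hx, ?_, ?_⟩
  · rw [(notMem_tsupport_iff_eventuallyEq.1 hx).fderiv_eq]; simp
  · rw [lapl_congr (notMem_tsupport_iff_eventuallyEq.1 hx)]; simp [lapl]

lemma Ladj_tsupport {n : ℕ} {Ω : Set (ES n)} {u : ES n → ES n} {ψ : ES n → ℝ}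
    (hψ : IsTest Ω ψ) : tsupport (Ladj u ψ) ⊆ tsupport ψ := by
  apply closure_minimal _ (isClosed_tsupport ψ)
  intro x hx
  by_contra h
  obtain ⟨h1, h2, h3⟩ := isTest_zero_off hψ h
  exact hx (by simp [Ladj, h1, h2, h3])

lemma Ladj_contOn {n : ℕ} {Ω : Set (ES n)} {u : ES n → ES n}
    (hu : ∀ x ∈ Ω, ContDiffAt ℝ 1 u x) {ψ : ES n → ℝ}
    (hψ : IsTest Ω ψ) : ContinuousOn (Ladj u ψ) Ω := by
  have h : ∀ m : ℕ, ∀ x ∈ Ω, ContDiffAt ℝ m ψ x := fun m x _ =>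
    (hψ.smooth.of_le (by exact_mod_cast le_top)).contDiffAt
  exact ((lapl_cont (h 2)).add (drift_cont hu (h 1))).add ((dvg_cont hu).mul (cont_of_cda (h 1)))

lemma Ladj_cont {n : ℕ} {Ω : Set (ES n)} (hΩ : IsOpen Ω) {u : ES n → ES n}
    (hu : ∀ x ∈ Ω, ContDiffAt ℝ 1 u x) {ψ : ES n → ℝ}
    (hψ : IsTest Ω ψ) : Continuous (Ladj u ψ) := by
  rw [continuous_iff_continuousAt]
  intro x
  by_cases hx : x ∈ tsupport ψ
  · exact (Ladj_contOn hu hψ).continuousAt (hΩ.mem_nhds (hψ.sub hx))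
  · exact (notMem_tsupport_iff_eventuallyEq.1 fun h => hx (Ladj_tsupport hψ h)).continuousAt

lemma Ladj_cs {n : ℕ} {Ω : Set (ES n)} {u : ES n → ES n} {ψ : ES n → ℝ}
    (hψ : IsTest Ω ψ) : HasCompactSupport (Ladj u ψ) :=
  hψ.cs.mono' ((subset_tsupport _).trans (Ladj_tsupport hψ))

lemma ibp_Ladj {n : ℕ} {Ω : Set (ES n)} (hΩ : IsOpen Ω) {u : ES n → ES n}
    (hu : ∀ x ∈ Ω, ContDiffAt ℝ 1 u x) {f ψ : ES n → ℝ}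
    (hf : ∀ x ∈ Ω, ContDiffAt ℝ 2 f x) (hψ : IsTest Ω ψ) :
    ∫ x, f x * Ladj u ψ x = - ∫ x, (-lapl f x + fderiv ℝ f x (u x)) * ψ x := by
  have hf1 : ∀ x ∈ Ω, ContDiffAt ℝ 1 f x := fun x hx => (hf x hx).of_le (by norm_num)
  have h1 := ibp_lapl hΩ hf hψ
  have h2 := ibp_drift hΩ hu hf1 hψ
  have e1 : ∀ x, f x * Ladj u ψ x = f x * lapl ψ x + f x * (fderiv ℝ ψ x (u x) + dvg u x * ψ x) := by
    intro x; unfold Ladj; ring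
  have e2 : ∀ x, (-lapl f x + fderiv ℝ f x (u x)) * ψ x =
    fderiv ℝ f x (u x) * ψ x - lapl f x * ψ x := by intro x; ring
  simp only [e1, e2]
  have i1 : Integrable (fun x => f x * lapl ψ x) := by
    simp only [lapl_eq, Finset.mul_sum]
    exact integrable_finsetSum _ fun i _ => int_mul hΩ (cont_of_cda hf) ((hψ.pd i).pd i)
  have i2 : Integrable (fun x => f x * Ladj u ψ x) := by
    refine (cont_mul hΩ (cont_of_cda hf) (Ladj_cont hΩ hu hψ) ((Ladj_tsupport hψ).trans hψ.sub)).integrable_of_hasCompactSupport (Ladj_cs hψ).mul_left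
  have i3 : Integrable (fun x => f x * (fderiv ℝ ψ x (u x) + dvg u x * ψ x)) := by
    refine (i2.sub i1).congr (ae_of_all _ fun x => ?_)
    simp only [Pi.sub_apply, e1]; ring
  rw [integral_add i1 i3, h1, h2, integral_sub (int_mul hΩ (drift_cont hu hf1) hψ)
    (int_mul hΩ (lapl_cont hf) hψ)]
  ring

/-- smooth approximation of the negative part -/
def jf (δ s : ℝ) : ℝ := (√(s ^ 2 + δ ^ 2) - δ - s) / 2
/-- its derivative -/
def jf' (δ s : ℝ) : ℝ := (s / √(s ^ 2 + δ ^ 2) - 1) / 2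

lemma sq_pos' {δ : ℝ} (hδ : 0 < δ) (s : ℝ) : 0 < s ^ 2 + δ ^ 2 := by positivity

lemma jf_contDiff {δ : ℝ} (hδ : 0 < δ) : ContDiff ℝ ∞ (jf δ) := by
  unfold jf
  have : ContDiff ℝ ∞ (fun s : ℝ => √(s ^ 2 + δ ^ 2)) := by
    apply ContDiff.sqrt (by fun_prop)
    intro s; exact (sq_pos' hδ s).ne'
  exact ((this.sub contDiff_const).sub contDiff_id).div_const 2

lemma jf_hasDeriv {δ : ℝ} (hδ : 0 < δ) (s : ℝ) : HasDerivAt (jf δ) (jf' δ s) s := by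
  unfold jf jf'
  have h0 : HasDerivAt (fun s : ℝ => s ^ 2 + δ ^ 2) (2 * s) s := by
    simpa using (hasDerivAt_pow 2 s).add_const (δ ^ 2)
  have h1 := h0.sqrt (sq_pos' hδ s).ne'
  have h2 := ((h1.sub_const δ).sub (hasDerivAt_id s)).div_const 2
  rw [mul_div_mul_left _ _ two_ne_zero] at h2
  exact h2

lemma jf'_hasDeriv {δ : ℝ} (hδ : 0 < δ) (s : ℝ) : ∃ d, 0 ≤ d ∧ HasDerivAt (jf' δ) d s := by
  have h0 : HasDerivAt (fun s : ℝ => s ^ 2 + δ ^ 2) (2 * s) s := by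
    simpa using (hasDerivAt_pow 2 s).add_const (δ ^ 2)
  have h1 := h0.sqrt (sq_pos' hδ s).ne'
  have hpos := Real.sqrt_pos.2 (sq_pos' hδ s)
  have h2 := (((hasDerivAt_id s).div h1 hpos.ne').sub_const 1).div_const 2
  refine ⟨_, ?_, h2⟩
  apply div_nonneg _ (by norm_num)
  apply div_nonneg _ (by positivity)
  have h3 : √(s ^ 2 + δ ^ 2) ^ 2 = s ^ 2 + δ ^ 2 := Real.sq_sqrt (sq_pos' hδ s).le
  have h4 : s * (2 * s / (2 * √(s ^ 2 + δ ^ 2))) = s ^ 2 / √(s ^ 2 + δ ^ 2) := by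
    field_simp
  simp only [id]
  rw [h4, one_mul, sub_nonneg, div_le_iff₀ hpos]
  nlinarith [sq_nonneg δ]

lemma jf_zero {δ : ℝ} (hδ : 0 < δ) : jf δ 0 = 0 := by
  simp [jf, Real.sqrt_sq hδ.le]

lemma abs_le_sqrt' (δ s : ℝ) : |s| ≤ √(s ^ 2 + δ ^ 2) :=
  Real.abs_le_sqrt (by nlinarith [sq_nonneg δ])

lemma jf_ge (δ s : ℝ) : max (-s) 0 - δ / 2 ≤ jf δ s := by
  have h := abs_le_sqrt' δ s
  unfold jf
  rcases le_total s 0 with hs | hs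
  · rw [abs_of_nonpos hs] at h
    rw [max_eq_left (by linarith)]; linarith
  · rw [abs_of_nonneg hs] at h
    rw [max_eq_right (by linarith)]; linarith

lemma jf'_bd {δ : ℝ} (hδ : 0 < δ) (s : ℝ) : -1 ≤ jf' δ s ∧ jf' δ s ≤ 0 := by
  have hpos := Real.sqrt_pos.2 (sq_pos' hδ s)
  have h := abs_le.1 (abs_le_sqrt' δ s)
  unfold jf'
  constructor
  · have : -1 ≤ s / √(s ^ 2 + δ ^ 2) := by rw [le_div_iff₀ hpos]; linarith [h.1]
    linarith
  · have : s / √(s ^ 2 + δ ^ 2) ≤ 1 := by rw [div_le_one hpos]; exact h.2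
    linarith

lemma jf_euler {δ : ℝ} (hδ : 0 < δ) (s : ℝ) : |jf δ s - s * jf' δ s| ≤ δ / 2 := by
  have hpos := Real.sqrt_pos.2 (sq_pos' hδ s)
  have h3 : √(s ^ 2 + δ ^ 2) ^ 2 = s ^ 2 + δ ^ 2 := Real.sq_sqrt (sq_pos' hδ s).le
  have h5 : δ ≤ √(s ^ 2 + δ ^ 2) := Real.le_sqrt_of_sq_le (by nlinarith [sq_nonneg s])
  have h4 : jf δ s - s * jf' δ s = (δ ^ 2 / √(s ^ 2 + δ ^ 2) - δ) / 2 := by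
    unfold jf jf'
    field_simp
    nlinarith
  have h6 : δ ^ 2 / √(s ^ 2 + δ ^ 2) ≤ δ := by
    rw [div_le_iff₀ hpos]; nlinarith
  have h7 : 0 ≤ δ ^ 2 / √(s ^ 2 + δ ^ 2) := by positivity
  rw [h4, abs_le]; constructor <;> linarith

lemma pd_comp {n : ℕ} {j : ℝ → ℝ} {d : ℝ} {ψ : ES n → ℝ} {x : ES n} (i : Fin n)
    (hj : HasDerivAt j d (ψ x)) (hψ : DifferentiableAt ℝ ψ x) :
    pd i (fun y => j (ψ y)) x = d * pd i ψ x := by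
  unfold pd
  have := hj.comp_hasFDerivAt x hψ.hasFDerivAt
  have h2 : fderiv ℝ (fun y => j (ψ y)) x = d • fderiv ℝ ψ x := this.fderiv
  rw [h2]; rfl

lemma jf_test {n : ℕ} {Ω : Set (ES n)} {ψ : ES n → ℝ} (hψ : IsTest Ω ψ) {δ : ℝ} (hδ : 0 < δ) :
    IsTest Ω (fun x => jf δ (ψ x)) := by
  have hs : tsupport (fun x => jf δ (ψ x)) ⊆ tsupport ψ :=
    tsupport_comp_subset (jf_zero hδ) ψ
  exact ⟨(jf_contDiff hδ).comp hψ.smooth, hψ.cs.comp_left (jf_zero hδ), hs.trans hψ.sub⟩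

lemma Ladj_jf {n : ℕ} {Ω : Set (ES n)} {u : ES n → ES n} {ψ : ES n → ℝ} (hψ : IsTest Ω ψ) {δ : ℝ}
    (hδ : 0 < δ) (x : ES n) :
    jf' δ (ψ x) * Ladj u ψ x - δ / 2 * |dvg u x| ≤ Ladj u (fun x => jf δ (ψ x)) x := by
  have hd : ∀ y, DifferentiableAt ℝ ψ y := fun y => hψ.smooth.differentiable (by simp) y
  have h1 : ∀ i, pd i (fun x => jf δ (ψ x)) = fun y => jf' δ (ψ y) * pd i ψ y := by
    intro i; ext y; exact pd_comp i (jf_hasDeriv hδ _) (hd y)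
  obtain ⟨d, hd0, hd1⟩ := jf'_hasDeriv hδ (ψ x)
  have hjd : DifferentiableAt ℝ (fun y => jf' δ (ψ y)) x :=
    (hd1.differentiableAt).comp x (hd x)
  have h2 : ∀ i, pd i (pd i (fun x => jf δ (ψ x))) x =
      jf' δ (ψ x) * pd i (pd i ψ) x + d * pd i ψ x ^ 2 := by
    intro i
    rw [h1 i, pd_mul i hjd ((hψ.pd i).smooth.differentiable (by simp) x), pd_comp i hd1 (hd x)]
    ring
  have h3 : lapl (fun x => jf δ (ψ x)) x = jf' δ (ψ x) * lapl ψ x + d * ∑ i, pd i ψ x ^ 2 := by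
    rw [lapl_eq, lapl_eq, Finset.mul_sum, Finset.mul_sum, ← Finset.sum_add_distrib]
    exact Finset.sum_congr rfl fun i _ => h2 i
  have h4 : fderiv ℝ (fun x => jf δ (ψ x)) x (u x) = jf' δ (ψ x) * fderiv ℝ ψ x (u x) := by
    rw [fderiv_eq_sum, fderiv_eq_sum, Finset.mul_sum]
    refine Finset.sum_congr rfl fun i _ => ?_
    rw [h1 i]; ring
  unfold Ladj
  rw [h3, h4]
  have h5 : 0 ≤ d * ∑ i, pd i ψ x ^ 2 := mul_nonneg hd0 (Finset.sum_nonneg fun i _ => sq_nonneg _)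
  have h6 : -(δ / 2 * |dvg u x|) ≤ dvg u x * (jf δ (ψ x) - ψ x * jf' δ (ψ x)) := by
    have := jf_euler hδ (ψ x)
    have h7 : |dvg u x * (jf δ (ψ x) - ψ x * jf' δ (ψ x))| ≤ δ / 2 * |dvg u x| := by
      rw [abs_mul, mul_comm]
      exact mul_le_mul_of_nonneg_right this (abs_nonneg _)
    exact (abs_le.1 h7).1
  nlinarith

lemma kato {n : ℕ} {Ω : Set (ES n)} (hΩ : IsOpen Ω) {u : ES n → ES n}
    (hu : ∀ x ∈ Ω, ContDiffAt ℝ 1 u x) {τ : ES n → ℝ} (hτ : ∀ x ∈ Ω, ContDiffAt ℝ 2 τ x)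
    (hτ0 : ∀ x ∈ Ω, 0 ≤ τ x)
    (hτL : ∀ x ∈ Ω, -lapl τ x + fderiv ℝ τ x (u x) = 1) {ψ : ES n → ℝ} (hψ : IsTest Ω ψ) :
    ∫ x, max (-ψ x) 0 ≤ ∫ x, τ x * max (Ladj u ψ x) 0 := by
  set S := tsupport ψ with hS
  have hSc : IsCompact S := hψ.cs
  have hSm : MeasurableSet S := hSc.measurableSet
  have hτc := cont_of_cda hτ
  have iS1 : Integrable (S.indicator fun _ => (1:ℝ)) :=
    (integrable_indicator_iff hSm).2 (integrableOn_const hSc.measure_lt_top.ne)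
  have iS2 : Integrable (S.indicator fun x => τ x * |dvg u x|) := by
    rw [integrable_indicator_iff hSm]
    exact ((hτc.mul (dvg_cont hu).abs).mono hψ.sub).integrableOn_compact hSc
  have iP : Integrable (fun x => τ x * max (Ladj u ψ x) 0) := by
    have hsub : tsupport (fun x => max (Ladj u ψ x) 0) ⊆ tsupport ψ :=
      (tsupport_comp_subset (g := fun s : ℝ => max s 0) (by simp) (Ladj u ψ)).trans (Ladj_tsupport hψ)
    refine (cont_mul hΩ hτc ((Ladj_cont hΩ hu hψ).max continuous_const)
      (hsub.trans hψ.sub)).integrable_of_hasCompactSupport ?_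
    apply HasCompactSupport.mul_left
    exact hψ.cs.mono' ((subset_tsupport _).trans hsub)
  have key : ∀ δ > 0, ∫ x, max (-ψ x) 0 ≤ (∫ x, τ x * max (Ladj u ψ x) 0) +
      δ * ((∫ x, (S.indicator fun x => τ x * |dvg u x|) x) / 2 + (∫ x, (S.indicator fun _ => (1:ℝ)) x) / 2) := by
    intro δ hδ
    have ht := jf_test hψ hδ
    have e1 := ibp_Ladj hΩ hu hτ ht
    have e2 : ∫ x, (-lapl τ x + fderiv ℝ τ x (u x)) * jf δ (ψ x) = ∫ x, jf δ (ψ x) := by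
      congr 1; ext x
      by_cases hx : x ∈ Ω
      · rw [hτL x hx, one_mul]
      · have : ψ x = 0 := image_eq_zero_of_notMem_tsupport fun h => hx (hψ.sub h)
        simp [this, jf_zero hδ]
    rw [e2] at e1
    have i1 : Integrable (fun x => jf δ (ψ x)) :=
      ht.smooth.continuous.integrable_of_hasCompactSupport ht.cs
    have i2 : Integrable (fun x => max (-ψ x) 0) := by
      refine Continuous.integrable_of_hasCompactSupport (hψ.smooth.continuous.neg.max continuous_const) ?_
      exact hψ.cs.comp_left (g := fun s : ℝ => max (-s) 0) (by simp)
    have i3 : Integrable (fun x => τ x * Ladj u (fun x => jf δ (ψ x)) x) :=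
      (cont_mul hΩ hτc (Ladj_cont hΩ hu ht) ((Ladj_tsupport ht).trans ht.sub)).integrable_of_hasCompactSupport
        (Ladj_cs ht).mul_left
    have l1 : ∫ x, max (-ψ x) 0 ≤ ∫ x, (jf δ (ψ x) + δ / 2 * (S.indicator fun _ => (1:ℝ)) x) := by
      refine integral_mono i2 (i1.add (iS1.const_mul _)) fun x => ?_
      by_cases hx : x ∈ S
      · have := jf_ge δ (ψ x)
        simp only [indicator_of_mem hx]; linarith
      · have : ψ x = 0 := image_eq_zero_of_notMem_tsupport hx
        simp [hx, this, jf_zero hδ]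
    have l2 : ∫ x, -(τ x * Ladj u (fun x => jf δ (ψ x)) x) ≤
        ∫ x, (τ x * max (Ladj u ψ x) 0 + δ / 2 * (S.indicator fun x => τ x * |dvg u x|) x) := by
      refine integral_mono i3.neg (iP.add (iS2.const_mul _)) fun x => ?_
      by_cases hx : x ∈ S
      · have h1 := Ladj_jf (u := u) hψ hδ x
        have h2 := hτ0 x (hψ.sub hx)
        have h3 := jf'_bd hδ (ψ x)
        have h4 : -jf' δ (ψ x) * Ladj u ψ x ≤ max (Ladj u ψ x) 0 := by
          have a1 := le_max_left (Ladj u ψ x) 0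
          have a2 := le_max_right (Ladj u ψ x) 0
          nlinarith
        simp only [indicator_of_mem hx]
        have h5 : -Ladj u (fun x => jf δ (ψ x)) x ≤ max (Ladj u ψ x) 0 + δ / 2 * |dvg u x| := by linarith
        have := mul_le_mul_of_nonneg_left h5 h2
        linarith
      · have hx' : x ∉ tsupport (fun x => jf δ (ψ x)) := fun h =>
          hx (tsupport_comp_subset (jf_zero hδ) ψ h)
        have a1 : Ladj u (fun x => jf δ (ψ x)) x = 0 := by
          obtain ⟨h1, h2, h3⟩ := isTest_zero_off ht hx'
          simp only [Ladj, h1, h2, h3]; simp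
        have a2 : Ladj u ψ x = 0 := by
          obtain ⟨h1, h2, h3⟩ := isTest_zero_off hψ hx
          simp [Ladj, h1, h2, h3]
        simp [a1, a2, hx]
    rw [integral_add i1 (iS1.const_mul _), integral_const_mul] at l1
    rw [integral_neg, integral_add iP (iS2.const_mul _), integral_const_mul, e1] at l2
    linarith
  set c := (∫ x, (S.indicator fun x => τ x * |dvg u x|) x) / 2 + (∫ x, (S.indicator fun _ => (1:ℝ)) x) / 2
  have ht : Tendsto (fun δ : ℝ => (∫ x, τ x * max (Ladj u ψ x) 0) + δ * c) (𝓝[>] 0)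
      (𝓝 ((∫ x, τ x * max (Ladj u ψ x) 0) + 0 * c)) := by
    apply Tendsto.mono_left _ nhdsWithin_le_nhds
    exact Continuous.tendsto (by fun_prop) 0
  have := ge_of_tendsto ht (by filter_upwards [self_mem_nhdsWithin] with ε hε using key ε hε)
  simpa using this

lemma IsTest.cda2 {n : ℕ} {Ω : Set (ES n)} {ψ : ES n → ℝ} (h : IsTest Ω ψ) (x : ES n) :
    ContDiffAt ℝ 2 ψ x := 
  (contDiff_infty.1 h.smooth 2).contDiffAt

lemma meas_indicator {n : ℕ} {Ω : Set (ES n)} (hΩ : IsOpen Ω) {f : ES n → ℝ}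
    (hf : ContinuousOn f Ω) : Measurable (Ω.indicator f) := by
  classical
  rw [← Set.piecewise_eq_indicator]
  exact hf.measurable_piecewise continuousOn_const hΩ.measurableSet

/-- The space of test functions. -/
def testSpace {n : ℕ} (Ω : Set (ES n)) : Submodule ℝ (ES n → ℝ) where
  carrier := {ψ | IsTest Ω ψ}
  zero_mem' := ⟨contDiff_const, HasCompactSupport.zero, by
    show tsupport (fun _ : ES n => (0:ℝ)) ⊆ Ω
    simp [tsupport]⟩
  add_mem' := fun {a b} ha hb => ⟨ha.smooth.add hb.smooth, ha.cs.add hb.cs,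
    (tsupport_add a b).trans (union_subset ha.sub hb.sub)⟩
  smul_mem' := fun c a ha => ⟨ha.smooth.const_smul c, ha.cs.smul_left (f := fun _ => c),
    (tsupport_smul_subset_right (fun _ => c) a).trans ha.sub⟩

lemma Ladj_add {n : ℕ} {Ω : Set (ES n)} (u : ES n → ES n) {f g : ES n → ℝ} (hf : IsTest Ω f)
    (hg : IsTest Ω g) (x : ES n) : Ladj u (f + g) x = Ladj u f x + Ladj u g x := by
  have h1 : lapl (f + g) x = _ := lapl_add (hf.cda2 x) (hg.cda2 x)
  have h2 := fderiv_add ((hf.cda2 x).differentiableAt (by simp)) ((hg.cda2 x).differentiableAt (by simp))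
  unfold Ladj
  rw [h1, h2]
  simp; ring

lemma Ladj_smul {n : ℕ} {Ω : Set (ES n)} (u : ES n → ES n) (c : ℝ) {f : ES n → ℝ} (hf : IsTest Ω f)
    (x : ES n) : Ladj u (c • f) x = c * Ladj u f x := by
  have h1 : lapl (c • f) x = _ := lapl_const_mul c (hf.cda2 x)
  have h2 := fderiv_const_smul ((hf.cda2 x).differentiableAt (by simp)) c
  unfold Ladj
  rw [h1, h2]
  simp; ring

lemma Ladj_memLp {n : ℕ} {Ω : Set (ES n)} (hΩ : IsOpen Ω) {u : ES n → ES n}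
    (hu : ∀ x ∈ Ω, ContDiffAt ℝ 1 u x) {ψ : ES n → ℝ}
    (hψ : IsTest Ω ψ) : MemLp (Ladj u ψ) 2 (volume.restrict Ω) :=
  ((Ladj_cont hΩ hu hψ).memLp_of_hasCompactSupport (Ladj_cs hψ)).restrict Ω

lemma exists_weak {n : ℕ} {Ω : Set (ES n)} (hΩ : IsOpen Ω) (hb : Bornology.IsBounded Ω)
    {u : ES n → ES n}
    (hu : ∀ x ∈ Ω, ContDiffAt ℝ 1 u x) {τ : ES n → ℝ} (hτ : ∀ x ∈ Ω, ContDiffAt ℝ 2 τ x)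
    (hτ0 : ∀ x ∈ Ω, 0 ≤ τ x) {θ : ℝ} (hθ : ∀ x ∈ Ω, τ x ≤ θ)
    (hτL : ∀ x ∈ Ω, -lapl τ x + fderiv ℝ τ x (u x) = 1)
    {h : ES n → ℝ} (hh : ContinuousOn h Ω) {M : ℝ} (h0 : ∀ x ∈ Ω, 0 ≤ h x)
    (hM : ∀ x ∈ Ω, h x ≤ M) (hM0 : 0 ≤ M) :
    ∃ φ : ES n → ℝ, Measurable φ ∧ (∀ x, x ∉ Ω → φ x = 0) ∧ (∀ x ∈ Ω, 0 ≤ φ x ∧ φ x ≤ M * τ x) ∧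
      ∀ ψ, IsTest Ω ψ → ∫ x, φ x * Ladj u ψ x = - ∫ x, h x * ψ x := by
  set μ : Measure (ES n) := volume.restrict Ω with hμ
  have hvol : volume Ω < ⊤ := hb.measure_lt_top
  have : IsFiniteMeasure μ := ⟨by simpa [hμ] using hvol⟩
  have hΩm := hΩ.measurableSet
  have hτm : AEStronglyMeasurable τ μ := (cont_of_cda hτ).aestronglyMeasurable hΩm
  have haeΩ : ∀ᵐ x ∂μ, x ∈ Ω := ae_restrict_mem hΩm
  have hτb : ∀ᵐ x ∂μ, ‖τ x‖ ≤ θ := by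
    filter_upwards [haeΩ] with x hx
    rw [Real.norm_of_nonneg (hτ0 x hx)]; exact hθ x hx
  have hint : ∀ F : Lp ℝ 2 μ, Integrable F μ := fun F => (Lp.memLp F).integrable (by norm_num)
  have hintm : ∀ F : Lp ℝ 2 μ, Integrable (fun x => max (F x) 0) μ := fun F => (hint F).pos_part
  have hintτ : ∀ f : ES n → ℝ, Integrable f μ → Integrable (fun x => τ x * f x) μ :=
    fun f hf => hf.bdd_mul hτm hτb
  -- the sublinear functional
  let p : Lp ℝ 2 μ → ℝ := fun F => M * ∫ x, τ x * max (F x) 0 ∂μ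
  have p_hom : ∀ c : ℝ, 0 < c → ∀ F, p (c • F) = c * p F := by
    intro c hc F
    simp only [p]
    have : ∫ x, τ x * max ((c • F : Lp ℝ 2 μ) x) 0 ∂μ = ∫ x, c * (τ x * max (F x) 0) ∂μ := by
      apply integral_congr_ae
      filter_upwards [Lp.coeFn_smul c F] with x hx
      rw [hx]
      simp only [Pi.smul_apply, smul_eq_mul]
      rw [← mul_zero c, ← mul_max_of_nonneg _ _ hc.le, mul_zero]; ring
    rw [this, integral_const_mul]; ring
  have p_add : ∀ F G, p (F + G) ≤ p F + p G := by
    intro F G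
    simp only [p]
    rw [← mul_add, ← integral_add (hintτ _ (hintm F)) (hintτ _ (hintm G))]
    refine mul_le_mul_of_nonneg_left (integral_mono_ae (hintτ _ (hintm _))
      ((hintτ _ (hintm F)).add (hintτ _ (hintm G))) ?_) hM0
    filter_upwards [Lp.coeFn_add F G, haeΩ] with x hx hxΩ
    rw [hx]
    simp only [Pi.add_apply]
    rw [← mul_add]
    refine mul_le_mul_of_nonneg_left ?_ (hτ0 x hxΩ)
    apply max_le
    · exact add_le_add (le_max_left _ _) (le_max_left _ _)
    · exact add_nonneg (le_max_right _ _) (le_max_right _ _)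
  have p_zero : p 0 = 0 := by
    have := p_hom 2 (by norm_num) 0
    rw [smul_zero] at this; linarith
  -- the linear maps
  let T : testSpace Ω →ₗ[ℝ] Lp ℝ 2 μ :=
    { toFun := fun ψ => (Ladj_memLp hΩ hu ψ.2).toLp _
      map_add' := by
        intro a b
        rw [← MemLp.toLp_add]
        apply MemLp.toLp_congr
        exact ae_of_all _ fun x => Ladj_add u a.2 b.2 x
      map_smul' := by
        intro c a
        rw [RingHom.id_apply, ← MemLp.toLp_const_smul]
        apply MemLp.toLp_congr
        exact ae_of_all _ fun x => Ladj_smul u c a.2 x }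
  have hTae : ∀ ψ : testSpace Ω, (T ψ : ES n → ℝ) =ᵐ[μ] Ladj u ψ.1 := fun ψ => MemLp.coeFn_toLp (Ladj_memLp hΩ hu ψ.2)
  let ℓ : testSpace Ω →ₗ[ℝ] ℝ :=
    { toFun := fun ψ => - ∫ x, h x * ψ.1 x
      map_add' := by
        intro a b
        have : ∀ x, h x * (a + b : testSpace Ω).1 x = h x * a.1 x + h x * b.1 x := by
          intro x; simp [mul_add]
        simp only [this]
        rw [integral_add (int_mul hΩ hh a.2) (int_mul hΩ hh b.2)]; ring
      map_smul' := by
        intro c a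
        have : ∀ x, h x * (c • a : testSpace Ω).1 x = c * (h x * a.1 x) := by
          intro x; simp; ring
        simp only [this]
        rw [integral_const_mul]; simp }
  have hℓp : ∀ ψ, ℓ ψ ≤ p (T ψ) := by
    intro ψ
    have k := kato hΩ hu hτ hτ0 hτL ψ.2
    have e1 : ∫ x, τ x * max (T ψ x) 0 ∂μ = ∫ x, τ x * max (Ladj u ψ.1 x) 0 := by
      rw [← setIntegral_eq_integral_of_forall_compl_eq_zero (s := Ω)
        (f := fun x => τ x * max (Ladj u ψ.1 x) 0)]
      · apply integral_congr_ae
        filter_upwards [hTae ψ] with x hx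
        rw [hx]
      · intro x hx
        obtain ⟨h1, h2, h3⟩ := isTest_zero_off ψ.2 fun h => hx (ψ.2.sub h)
        simp [Ladj, h1, h2, h3]
    have e2 : - ∫ x, h x * ψ.1 x ≤ M * ∫ x, max (-ψ.1 x) 0 := by
      rw [← integral_neg, ← integral_const_mul]
      refine integral_mono (int_mul hΩ hh ψ.2).neg ?_ fun x => ?_
      · refine Integrable.const_mul (Continuous.integrable_of_hasCompactSupport
          (ψ.2.smooth.continuous.neg.max continuous_const) ?_) M
        exact ψ.2.cs.comp_left (g := fun s : ℝ => max (-s) 0) (by simp)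
      · by_cases hx : x ∈ Ω
        · have a1 := le_max_left (-ψ.1 x) 0
          have a2 := le_max_right (-ψ.1 x) 0
          have a3 := h0 x hx
          have a4 := hM x hx
          show -(h x * ψ.1 x) ≤ M * max (-ψ.1 x) 0
          nlinarith
        · have : ψ.1 x = 0 := image_eq_zero_of_notMem_tsupport fun h => hx (ψ.2.sub h)
          simp [this]
    show - ∫ x, h x * ψ.1 x ≤ M * ∫ x, τ x * max (T ψ x) 0 ∂μ
    rw [e1]
    exact e2.trans (mul_le_mul_of_nonneg_left k hM0)
  have hker : ℓ ∈ LinearMap.range T.dualMap := by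
    rw [LinearMap.range_dualMap_eq_dualAnnihilator_ker, Submodule.mem_dualAnnihilator]
    intro ψ hψ
    rw [LinearMap.mem_ker] at hψ
    have a1 := hℓp ψ
    have a2 := hℓp (-ψ)
    rw [hψ, p_zero] at a1
    rw [map_neg, map_neg, hψ, neg_zero, p_zero] at a2
    linarith
  obtain ⟨ℓ', hℓ'⟩ := hker
  have hℓ'T : ∀ ψ, ℓ' (T ψ) = ℓ ψ := fun ψ => by rw [← hℓ']; rfl
  obtain ⟨Λ, hΛ1, hΛ2⟩ := exists_extension_of_le_sublinear
    (⟨LinearMap.range T, ℓ'.domRestrict (LinearMap.range T)⟩ : Lp ℝ 2 μ →ₗ.[ℝ] ℝ) p p_hom p_add (by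
      rintro ⟨_, ψ, rfl⟩
      show ℓ' (T ψ) ≤ p (T ψ)
      rw [hℓ'T]; exact hℓp ψ)
  have hΛT : ∀ ψ, Λ (T ψ) = ℓ ψ := by
    intro ψ
    rw [← hℓ'T]
    exact hΛ1 ⟨T ψ, ψ, rfl⟩
  -- continuity
  have hθ0 : ∀ᵐ x ∂μ, (0:ℝ) ≤ θ := by
    filter_upwards [haeΩ] with x hx using (hτ0 x hx).trans (hθ x hx)
  have hτLp : MemLp τ 2 μ := MemLp.of_bound hτm θ hτb
  have hpb : ∀ F, p F ≤ M * ‖hτLp.toLp τ‖ * ‖F‖ := by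
    intro F
    simp only [p]
    rw [mul_assoc]
    refine mul_le_mul_of_nonneg_left ?_ hM0
    have e : ∫ x, τ x * max (F x) 0 ∂μ = inner ℝ (hτLp.toLp τ) (Lp.posPart F) := by
      rw [L2.inner_def]
      apply integral_congr_ae
      filter_upwards [hτLp.coeFn_toLp, Lp.coeFn_posPart F] with x h1 h2
      rw [h1, h2]; simp [mul_comm]
    rw [e]
    refine (real_inner_le_norm _ _).trans (mul_le_mul_of_nonneg_left ?_ (norm_nonneg _))
    apply Lp.norm_le_norm_of_ae_le
    filter_upwards [Lp.coeFn_posPart F] with x h2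
    rw [h2, Real.norm_of_nonneg (le_max_right _ _)]
    exact max_le (le_abs_self _) (abs_nonneg _)
  let Λc : Lp ℝ 2 μ →L[ℝ] ℝ := LinearMap.mkContinuous Λ (M * ‖hτLp.toLp τ‖) (by
    intro F
    rw [Real.norm_eq_abs, abs_le]
    constructor
    · have := (hΛ2 (-F)).trans (hpb (-F))
      rw [map_neg, norm_neg] at this; linarith
    · exact (hΛ2 F).trans (hpb F))
  set φ₀ : Lp ℝ 2 μ := (InnerProductSpace.toDual ℝ (Lp ℝ 2 μ)).symm Λc with hφ₀
  have hrep : ∀ F, ∫ x, φ₀ x * F x ∂μ = Λ F := by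
    intro F
    have : inner ℝ φ₀ F = Λc F := InnerProductSpace.toDual_symm_apply
    rw [L2.inner_def] at this
    rw [show Λ F = Λc F from rfl, ← this]
    congr 1; ext x; simp [mul_comm]
  have hineq : ∀ F : ES n → ℝ, MemLp F 2 μ → ∫ x, φ₀ x * F x ∂μ ≤ M * ∫ x, τ x * max (F x) 0 ∂μ := by
    intro F hF
    have a1 := hΛ2 (hF.toLp F)
    rw [← hrep] at a1
    have e1 : ∫ x, φ₀ x * (hF.toLp F) x ∂μ = ∫ x, φ₀ x * F x ∂μ := by
      apply integral_congr_ae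
      filter_upwards [hF.coeFn_toLp] with x hx; rw [hx]
    have e2 : p (hF.toLp F) = M * ∫ x, τ x * max (F x) 0 ∂μ := by
      simp only [p]; congr 1
      apply integral_congr_ae
      filter_upwards [hF.coeFn_toLp] with x hx; rw [hx]
    rwa [e1, e2] at a1
  have hφL := Lp.memLp φ₀
  have hnonneg : ∀ᵐ x ∂μ, 0 ≤ φ₀ x := by
    have hF : MemLp (fun x => min (φ₀ x) 0) 2 μ := by
      have : MemLp (fun x => -max (-φ₀ x) 0) 2 μ := (hφL.neg.pos_part).neg
      refine this.ae_eq (ae_of_all _ fun x => ?_)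
      rcases le_total (φ₀ x) 0 with h | h <;> simp [h]
    have a := hineq _ hF
    have e1 : ∀ x, τ x * max (min (φ₀ x) 0) 0 = 0 := by
      intro x; rw [max_eq_right (min_le_right _ _), mul_zero]
    have e2 : ∀ x, φ₀ x * min (φ₀ x) 0 = (min (φ₀ x) 0) ^ 2 := by
      intro x; rcases le_total (φ₀ x) 0 with h | h <;> simp [h, sq]
    simp only [e1, e2, integral_zero, mul_zero] at a
    have a2 := (integral_eq_zero_iff_of_nonneg (fun x => sq_nonneg _) hF.integrable_sq).1
      (le_antisymm a (integral_nonneg fun x => sq_nonneg _))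
    filter_upwards [a2] with x hx
    have : min (φ₀ x) 0 = 0 := by simpa using hx
    rw [← this]; exact min_le_left _ _
  have hupper : ∀ᵐ x ∂μ, φ₀ x ≤ M * τ x := by
    have hF : MemLp (fun x => max (φ₀ x - M * τ x) 0) 2 μ := (hφL.sub (hτLp.const_mul M)).pos_part
    have a := hineq _ hF
    have e1 : ∀ x, max (max (φ₀ x - M * τ x) 0) 0 = max (φ₀ x - M * τ x) 0 := by
      intro x; simp
    simp only [e1] at a
    have i1 : Integrable (fun x => φ₀ x * max (φ₀ x - M * τ x) 0) μ := hφL.integrable_mul hF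
    have i2 : Integrable (fun x => τ x * max (φ₀ x - M * τ x) 0) μ := hτLp.integrable_mul hF
    have e2 : ∫ x, (max (φ₀ x - M * τ x) 0) ^ 2 ∂μ = (∫ x, φ₀ x * max (φ₀ x - M * τ x) 0 ∂μ) -
        M * ∫ x, τ x * max (φ₀ x - M * τ x) 0 ∂μ := by
      rw [← integral_const_mul, ← integral_sub i1 (i2.const_mul M)]
      congr 1; ext x
      rcases le_total (φ₀ x - M * τ x) 0 with h | h
      · simp [h]
      · rw [max_eq_left h]; ring
    have a2 := (integral_eq_zero_iff_of_nonneg (fun x => sq_nonneg _) hF.integrable_sq).1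
      (le_antisymm (by rw [e2]; linarith) (integral_nonneg fun x => sq_nonneg _))
    filter_upwards [a2] with x hx
    have : max (φ₀ x - M * τ x) 0 = 0 := by simpa using hx
    have := le_max_left (φ₀ x - M * τ x) 0
    linarith
  have hτi : Measurable (Ω.indicator τ) := meas_indicator hΩ (cont_of_cda hτ)
  refine ⟨Ω.indicator fun x => max 0 (min (φ₀ x) (M * Ω.indicator τ x)), ?_, ?_, ?_, ?_⟩
  · exact (measurable_const.max ((Lp.stronglyMeasurable φ₀).measurable.min (hτi.const_mul M))).indicator hΩm
  · intro x hx; simp [hx]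
  · intro x hx
    simp only [indicator_of_mem hx]
    exact ⟨le_max_left _ _, max_le (mul_nonneg hM0 (hτ0 x hx)) (min_le_right _ _)⟩
  · intro ψ hψ
    rw [← setIntegral_eq_integral_of_forall_compl_eq_zero (s := Ω) (by
      intro x hx; simp [hx])]
    have := hrep (T ⟨ψ, hψ⟩)
    rw [hΛT] at this
    show _ = ℓ ⟨ψ, hψ⟩
    rw [← this]
    apply integral_congr_ae
    filter_upwards [hTae ⟨ψ, hψ⟩, haeΩ, hnonneg, hupper] with x h1 h2 h3 h4
    rw [h1]
    simp only [indicator_of_mem h2]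
    rw [min_eq_left h4, max_eq_right h3]

lemma pd_comm {n : ℕ} {f : ES n → ℝ} (hf : ContDiff ℝ ∞ f) (i j : Fin n) (x : ES n) :
    pd i (pd j f) x = pd j (pd i f) x := by
  have hf2 : ContDiffAt ℝ 2 f x := (contDiff_infty.1 hf 2).contDiffAt
  have hs := hf2.isSymmSndFDerivAt (by simp)
  have hd : DifferentiableAt ℝ (fderiv ℝ f) x :=
    (hf2.fderiv_right (m := 1) (by norm_num)).differentiableAt (by simp)
  have key : ∀ a b : Fin n, pd a (pd b f) x =
      fderiv ℝ (fderiv ℝ f) x (EuclideanSpace.single a 1) (EuclideanSpace.single b 1) := by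
    intro a b
    unfold pd
    rw [fderiv_clm_apply hd (differentiableAt_const _)]
    simp
  rw [key, key]; exact hs _ _

lemma pd_sum {n : ℕ} {ι : Type*} (s : Finset ι) {f : ι → ES n → ℝ} {x : ES n} (i : Fin n)
    (hf : ∀ k ∈ s, DifferentiableAt ℝ (f k) x) :
    pd i (fun y => ∑ k ∈ s, f k y) x = ∑ k ∈ s, pd i (f k) x := by
  unfold pd; rw [fderiv_fun_sum hf]; simp

lemma smooth_da {n : ℕ} {f : ES n → ℝ} (hf : ContDiff ℝ ∞ f) (x : ES n) : DifferentiableAt ℝ f x :=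
  (contDiff_infty.1 hf 1).contDiffAt.differentiableAt (by simp)

lemma smooth_lapl {n : ℕ} {f : ES n → ℝ} (hf : ContDiff ℝ ∞ f) : ContDiff ℝ ∞ (lapl f) :=
  ContDiff.sum fun i _ => pd_contDiff i (pd_contDiff i hf)

lemma lapl_pd {n : ℕ} {f : ES n → ℝ} (hf : ContDiff ℝ ∞ f) (j : Fin n) (x : ES n) :
    lapl (pd j f) x = pd j (lapl f) x := by
  have : pd j (lapl f) x = ∑ i, pd j (pd i (pd i f)) x :=
    pd_sum _ j fun k _ => smooth_da (pd_contDiff k (pd_contDiff k hf)) x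
  rw [this, lapl_eq]
  refine Finset.sum_congr rfl fun i _ => ?_
  rw [pd_comm (pd_contDiff i hf) j i]
  refine pd_congr i (Eventually.of_forall fun y => pd_comm hf i j y)

lemma pd_coord {n : ℕ} (i j : Fin n) (x : ES n) :
    pd j (fun z : ES n => z i) x = if i = j then 1 else 0 := by
  have : HasFDerivAt (fun z : ES n => z i) (EuclideanSpace.proj i : ES n →L[ℝ] ℝ) x :=
    (EuclideanSpace.proj i : ES n →L[ℝ] ℝ).hasFDerivAt
  unfold pd; rw [this.fderiv]
  simp [Pi.single_apply]

/-- smooth kernel supported in the closed unit ball -/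
structure Ker {n : ℕ} (P : ES n → ℝ) : Prop where
  smooth : ContDiff ℝ ∞ P
  zero : ∀ z, 1 < ‖z‖ → P z = 0

lemma Ker.ts {n : ℕ} {P : ES n → ℝ} (h : Ker P) : tsupport P ⊆ Metric.closedBall 0 1 := by
  refine closure_minimal (fun z hz => ?_) Metric.isClosed_closedBall
  by_contra hc
  exact hz (h.zero z (by simpa using hc))

lemma Ker.cs {n : ℕ} {P : ES n → ℝ} (h : Ker P) : HasCompactSupport P :=
  (isCompact_closedBall _ _).of_isClosed_subset (isClosed_tsupport _) h.ts

lemma Ker.pd {n : ℕ} {P : ES n → ℝ} (h : Ker P) (i : Fin n) : Ker (pd i P) := by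
  refine ⟨pd_contDiff i h.smooth, fun z hz => ?_⟩
  apply image_eq_zero_of_notMem_tsupport
  intro h2
  have := h.ts (tsupport_pd i P h2)
  simp at this; linarith

lemma Ker.bdd {n : ℕ} {P : ES n → ℝ} (h : Ker P) : ∃ C, 0 ≤ C ∧ ∀ z, |P z| ≤ C := by
  obtain ⟨C, hC⟩ := h.cs.exists_bound_of_continuous h.smooth.continuous
  exact ⟨C, (norm_nonneg _).trans (hC 0), hC⟩

lemma Ker.lip {n : ℕ} {P : ES n → ℝ} (h : Ker P) : ∃ C, 0 ≤ C ∧ (∀ z, ‖fderiv ℝ P z‖ ≤ C) ∧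
    ∀ z w, |P z - P w| ≤ C * ‖z - w‖ := by
  have hc : Continuous (fderiv ℝ P) := h.smooth.continuous_fderiv (by simp)
  obtain ⟨C, hC⟩ := (h.cs.fderiv ℝ).exists_bound_of_continuous hc
  refine ⟨C, (norm_nonneg _).trans (hC 0), hC, fun z w => ?_⟩
  exact Convex.norm_image_sub_le_of_norm_fderiv_le (s := univ) (fun x _ => smooth_da h.smooth x)
    (fun x _ => hC x) convex_univ (mem_univ _) (mem_univ _)

lemma Ker.int {n : ℕ} {P : ES n → ℝ} (h : Ker P) : Integrable P :=
  h.smooth.continuous.integrable_of_hasCompactSupport h.cs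

lemma Ker.test {n : ℕ} {P : ES n → ℝ} (h : Ker P) : IsTest univ P := ⟨h.smooth, h.cs, subset_univ _⟩

lemma Ker.int_pd {n : ℕ} {P : ES n → ℝ} (h : Ker P) (i : Fin n) : ∫ z, _root_.pd i P z = 0 := by
  have := ibp (Ω := univ) isOpen_univ (f := fun _ => (1:ℝ)) (fun x _ => contDiffAt_const) h.test i
  simp only [one_mul] at this
  rw [this]
  have : ∀ x : ES n, _root_.pd i (fun _ => (1:ℝ)) x = 0 := by intro x; simp [_root_.pd]
  simp [this]

/-- kernel pair -/
structure Pair {n : ℕ} (m : ℕ) (P S : ES n → ℝ) : Prop where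
  kP : Ker P
  kS : Ker S
  eq : ∀ z, lapl S z = -((m + n : ℕ) : ℝ) * P z - fderiv ℝ P z z

lemma Pair.pd {n m : ℕ} {P S : ES n → ℝ} (h : Pair m P S) (j : Fin n) :
    Pair (m+1) (pd j P) (pd j S) := by
  refine ⟨h.kP.pd j, h.kS.pd j, fun z => ?_⟩
  rw [lapl_pd h.kS.smooth]
  have e : lapl S = fun z => -((m + n : ℕ) : ℝ) * P z + (-1) * ∑ i, z i * _root_.pd i P z := by
    funext z; rw [h.eq, fderiv_eq_sum]; ring
  have dc : ∀ i : Fin n, DifferentiableAt ℝ (fun z : ES n => z i) z := fun i =>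
    (EuclideanSpace.proj i : ES n →L[ℝ] ℝ).differentiableAt
  have dp : ∀ i, DifferentiableAt ℝ (_root_.pd i P) z := fun i => smooth_da (h.kP.pd i).smooth z
  have dm : ∀ i : Fin n, DifferentiableAt ℝ (fun z : ES n => z i * _root_.pd i P z) z := fun i => (dc i).mul (dp i)
  have ds : DifferentiableAt ℝ (fun z : ES n => ∑ i, z i * _root_.pd i P z) z :=
    DifferentiableAt.fun_sum fun i _ => dm i
  rw [e, pd_add j ((smooth_da h.kP.smooth z).const_mul _) (ds.const_mul _),
    pd_const_mul j _ (smooth_da h.kP.smooth z), pd_const_mul j _ ds, pd_sum _ j fun i _ => dm i,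
    fderiv_eq_sum]
  have : ∀ i, _root_.pd j (fun z : ES n => z i * _root_.pd i P z) z =
      z i * _root_.pd i (_root_.pd j P) z + if i = j then _root_.pd i P z else 0 := by
    intro i
    rw [pd_mul j (dc i) (dp i), pd_coord, pd_comm h.kP.smooth j i]
    split_ifs <;> simp
  simp only [this, Finset.sum_add_distrib]
  simp
  ring

lemma exists_pair (n : ℕ) : ∃ η K : ES n → ℝ, Pair 0 η K ∧ ∫ z, η z = 1 := by
  set e := expNegInvGlue with he
  have hes : ContDiff ℝ ∞ e := expNegInvGlue.contDiff
  have hed : ∀ s, HasDerivAt e (s⁻¹ ^ 2 * e s) s := by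
    intro s
    have := expNegInvGlue.hasDerivAt_polynomial_eval_inv_mul 1 s
    simpa using this
  set e' : ℝ → ℝ := fun s => s⁻¹ ^ 2 * e s with he'
  have he's : ContDiff ℝ ∞ e' := by
    have := expNegInvGlue.contDiff_polynomial_eval_inv_mul (n := ⊤) (Polynomial.X ^ 2)
    simpa [he', he] using this
  set q : ES n → ℝ := fun x => 1 - ‖x‖ ^ 2 with hq
  have hqs : ContDiff ℝ ∞ q := contDiff_const.sub (contDiff_norm_sq ℝ)
  set K : ES n → ℝ := fun x => e (q x)
  set η : ES n → ℝ := fun x => 2 * e' (q x)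
  have hKs : ContDiff ℝ ∞ K := hes.comp hqs
  have hηs : ContDiff ℝ ∞ η := contDiff_const.mul (he's.comp hqs)
  have q0 : ∀ z, 1 < ‖z‖ → e (q z) = 0 := by
    intro z hz
    apply expNegInvGlue.zero_of_nonpos
    simp only [hq]; nlinarith
  have kK : Ker K := ⟨hKs, q0⟩
  have kη : Ker η := ⟨hηs, fun z hz => by simp [η, he', q0 z hz]⟩
  have hqd : ∀ x i, pd i q x = -2 * x i := by
    intro x i
    have h1 : HasFDerivAt q _ x := ((hasStrictFDerivAt_norm_sq x).hasFDerivAt).const_sub 1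
    unfold pd; rw [h1.fderiv]
    simp [EuclideanSpace.inner_single_right]
  have hKd : ∀ i x, pd i K x = x i * (-1 * η x) := by
    intro i x
    have : HasFDerivAt K (e' (q x) • fderiv ℝ q x) x :=
      (hed (q x)).comp_hasFDerivAt x (smooth_da hqs x).hasFDerivAt
    have h2 := hqd x i
    unfold pd at h2 ⊢
    rw [this.fderiv]
    simp only [ContinuousLinearMap.smul_apply, h2, η, smul_eq_mul]; ring
  have hpair : ∀ z, lapl K z = -((0 + n : ℕ) : ℝ) * η z - fderiv ℝ η z z := by
    intro z
    rw [lapl_eq, fderiv_eq_sum]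
    have : ∀ i, pd i (pd i K) z = -η z - z i * pd i η z := by
      intro i
      have : pd i K = fun x => x i * (-1 * η x) := funext fun x => hKd i x
      rw [this, pd_mul (f := fun z : ES n => z i) i ((EuclideanSpace.proj i : ES n →L[ℝ] ℝ).differentiableAt)
        ((smooth_da hηs z).const_mul _), pd_coord, pd_const_mul i _ (smooth_da hηs z)]
      simp; ring
    simp only [this, Finset.sum_sub_distrib]
    simp
  have hpos : 0 < ∫ z, η z := by
    have h0 : ∀ z, 0 ≤ η z := fun z => by
      have := expNegInvGlue.nonneg (q z)
      simp only [η, he']; positivity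
    apply kη.smooth.continuous.integral_pos_of_hasCompactSupport_nonneg_nonzero kη.cs h0 (x := 0)
    have := expNegInvGlue.pos_of_pos (x := 1) one_pos
    simp [η, he', hq, he, this.ne']
  set c := (∫ z, η z)⁻¹
  refine ⟨fun z => c * η z, fun z => c * K z, ⟨⟨contDiff_const.mul hηs, fun z hz => by simp [kη.zero z hz]⟩,
    ⟨contDiff_const.mul hKs, fun z hz => by simp [kK.zero z hz]⟩, fun z => ?_⟩, ?_⟩
  · rw [lapl_const_mul c ((contDiff_infty.1 hKs 2).contDiffAt), hpair,
      fderiv_const_mul (smooth_da hηs z)]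
    simp; ring
  · rw [integral_const_mul]; exact inv_mul_cancel₀ hpos.ne'

/-- scaled averages with weight -/
def FF {n : ℕ} (φ : ES n → ℝ) (m : ℕ) (P : ES n → ℝ) (t : ℝ) (x : ES n) : ℝ :=
  ∫ y, φ y * ((t ^ (m + n))⁻¹ * P (t⁻¹ • (x - y)))

/-- scaled averages -/
def mol {n : ℕ} (f : ES n → ℝ) (Q : ES n → ℝ) (t : ℝ) (x : ES n) : ℝ :=
  (t ^ n)⁻¹ * ∫ y, f y * Q (t⁻¹ • (x - y))

lemma Ker.cont_scale {n : ℕ} {P : ES n → ℝ} (h : Ker P) (t : ℝ) (x : ES n) :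
    Continuous fun y => P (t⁻¹ • (x - y)) :=
  h.smooth.continuous.comp (by fun_prop)

lemma int_scale {n : ℕ} (Q : ES n → ℝ) {t : ℝ} (ht : 0 < t) (x : ES n) :
    ∫ y, Q (t⁻¹ • (x - y)) = t ^ n * ∫ z, Q z := by
  rw [integral_sub_left_eq_self (fun y => Q (t⁻¹ • y)) volume x,
    Measure.integral_comp_inv_smul_of_nonneg volume Q ht.le]
  simp

lemma Ker.scale_int {n : ℕ} {P : ES n → ℝ} (h : Ker P) {t : ℝ} (ht : 0 < t) (x : ES n) :
    Integrable fun y => P (t⁻¹ • (x - y)) := by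
  have h1 : Integrable fun y => P (t⁻¹ • y) := h.int.comp_smul (inv_ne_zero ht.ne')
  exact h1.comp_sub_left x

lemma Ker.scale_zero {n : ℕ} {P : ES n → ℝ} (h : Ker P) {t : ℝ} (ht : 0 < t) {x y : ES n}
    (hy : t < dist y x) : P (t⁻¹ • (x - y)) = 0 := by
  apply h.zero
  rw [norm_smul, norm_inv, Real.norm_of_nonneg ht.le, ← dist_eq_norm, dist_comm]
  rw [inv_mul_eq_div, lt_div_iff₀ ht]; linarith

lemma mol_bound {n : ℕ} {f Q : ES n → ℝ} (hQ : Ker Q) {t : ℝ} (ht : 0 < t) {x : ES n} {M : ℝ}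
    (hf : ∀ y, dist y x ≤ t → |f y| ≤ M) : |mol f Q t x| ≤ M * ∫ z, |Q z| := by
  have h1 : ‖∫ y, f y * Q (t⁻¹ • (x - y))‖ ≤ ∫ y, M * |Q (t⁻¹ • (x - y))| := by
    apply norm_integral_le_of_norm_le ((hQ.scale_int ht x).abs.const_mul M)
    refine ae_of_all _ fun y => ?_
    rw [norm_mul]
    by_cases hy : dist y x ≤ t
    · exact mul_le_mul_of_nonneg_right (hf y hy) (abs_nonneg _)
    · rw [hQ.scale_zero ht (not_le.1 hy)]; simp
  rw [integral_const_mul, int_scale (fun z => |Q z|) ht] at h1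
  have htn : 0 < t ^ n := pow_pos ht n
  unfold mol
  rw [abs_mul, abs_of_pos (inv_pos.2 htn), inv_mul_le_iff₀ htn]
  calc _ ≤ _ := h1
    _ = _ := by ring

lemma mol_sub_const {n : ℕ} {f Q : ES n → ℝ} (hQ : Ker Q) {t : ℝ} (ht : 0 < t) {x : ES n}
    (hi : Integrable fun y => f y * Q (t⁻¹ • (x - y))) (c : ℝ) :
    mol (fun y => f y - c) Q t x = mol f Q t x - c * ∫ z, Q z := by
  have htn : 0 < t ^ n := pow_pos ht n
  unfold mol
  simp only [sub_mul]
  rw [integral_sub hi ((hQ.scale_int ht x).const_mul c), integral_const_mul, int_scale Q ht]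
  field_simp

lemma mol_holder {n : ℕ} {f Q : ES n → ℝ} (hQ : Ker Q) (hQ0 : ∫ z, Q z = 0) {t : ℝ} (ht : 0 < t)
    {x : ES n} {M : ℝ} (hf : ∀ y, dist y x ≤ t → |f y - f x| ≤ M) :
    |mol f Q t x| ≤ M * ∫ z, |Q z| := by
  by_cases hi : Integrable fun y => f y * Q (t⁻¹ • (x - y))
  · have := mol_bound hQ ht hf
    rw [mol_sub_const hQ ht hi, hQ0] at this
    simpa using this
  · unfold mol
    rw [integral_undef hi]
    have hM : 0 ≤ M := (abs_nonneg _).trans (hf x (by simp [ht.le]))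
    have : 0 ≤ ∫ z, |Q z| := integral_nonneg fun _ => abs_nonneg _
    simpa using mul_nonneg hM this

lemma FF_eq_mol {n : ℕ} (φ : ES n → ℝ) (m : ℕ) (P : ES n → ℝ) (t : ℝ) (x : ES n) :
    FF φ m P t x = (t ^ m)⁻¹ * mol φ P t x := by
  unfold FF mol
  rw [← mul_assoc, ← integral_const_mul]
  congr 1; ext y
  rw [pow_add, mul_inv]; ring

lemma int_FF {n : ℕ} {φ P : ES n → ℝ} (hφ : Integrable φ) (hP : Ker P) (c t : ℝ) (x : ES n) :
    Integrable fun y => φ y * (c * P (t⁻¹ • (x - y))) := by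
  obtain ⟨C, hC0, hC⟩ := hP.bdd
  have := hφ.bdd_mul (f := fun y => c * P (t⁻¹ • (x - y))) (c := |c| * C)
    (((hP.cont_scale t x).const_mul c).aestronglyMeasurable) (ae_of_all _ fun y => by
      rw [norm_mul]; exact mul_le_mul_of_nonneg_left (hC _) (abs_nonneg _))
  simpa only [mul_comm] using this

lemma hasDerivAt_inv_pow (N : ℕ) {t : ℝ} (ht : 0 < t) :
    HasDerivAt (fun t : ℝ => (t ^ N)⁻¹) (-(N:ℝ) * (t ^ (N+1))⁻¹) t := by
  cases N with
  | zero => simpa using hasDerivAt_const t (1:ℝ)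
  | succ N =>
    have := (hasDerivAt_pow (N+1) t).inv (pow_ne_zero _ ht.ne')
    convert! this using 1
    simp only [Nat.add_sub_cancel]
    field_simp
    ring

lemma Pair.hasDerivAt {n m : ℕ} {P S : ES n → ℝ} (h : Pair m P S) {t : ℝ} (ht : 0 < t) (v : ES n) :
    HasDerivAt (fun t : ℝ => (t ^ (m + n))⁻¹ * P (t⁻¹ • v))
      ((t ^ (m + n + 1))⁻¹ * lapl S (t⁻¹ • v)) t := by
  have h1 : HasDerivAt (fun t : ℝ => t⁻¹ • v) ((-(t^2)⁻¹) • v) t :=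
    (hasDerivAt_inv ht.ne').smul_const v
  have h2 : HasDerivAt (fun t : ℝ => P (t⁻¹ • v)) (fderiv ℝ P (t⁻¹ • v) ((-(t^2)⁻¹) • v)) t :=
    (smooth_da h.kP.smooth (t⁻¹ • v)).hasFDerivAt.comp_hasDerivAt t h1
  have h3 := (hasDerivAt_inv_pow (m + n) ht).mul h2
  convert! h3 using 1
  rw [h.eq]
  have e : ((-(t^2)⁻¹) • v) = (-t⁻¹) • (t⁻¹ • v) := by
    rw [smul_smul]; congr 1; field_simp
  rw [e, (fderiv ℝ P (t⁻¹ • v)).map_smul (-t⁻¹) (t⁻¹ • v), smul_eq_mul]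
  generalize fderiv ℝ P (t⁻¹ • v) (t⁻¹ • v) = w
  generalize P (t⁻¹ • v) = p
  rw [pow_succ, mul_inv]
  ring

lemma Ker.lapl {n : ℕ} {S : ES n → ℝ} (h : Ker S) : Ker (lapl S) := by
  refine ⟨smooth_lapl h.smooth, fun z hz => ?_⟩
  rw [lapl_eq]
  exact Finset.sum_eq_zero fun i _ => ((h.pd i).pd i).zero z hz

lemma FF_hasDerivAt {n m : ℕ} {φ P S : ES n → ℝ} (hφ : Integrable φ) (h : Pair m P S) {t : ℝ}
    (ht : 0 < t) (x : ES n) :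
    HasDerivAt (fun t => FF φ m P t x) (FF φ (m+1) (lapl S) t x) t := by
  obtain ⟨C, hC0, hC⟩ := h.kS.lapl.bdd
  have e : FF φ (m+1) (lapl S) t x = ∫ y, φ y * ((t ^ (m + n + 1))⁻¹ * lapl S (t⁻¹ • (x - y))) := by
    unfold FF; rw [show m + 1 + n = m + n + 1 by ring]
  rw [e]
  refine (hasDerivAt_integral_of_dominated_loc_of_deriv_le (s := Ioi (t/2))
    (F' := fun t y => φ y * ((t ^ (m + n + 1))⁻¹ * lapl S (t⁻¹ • (x - y))))
    (bound := fun y => ‖φ y‖ * (((t/2) ^ (m + n + 1))⁻¹ * C))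
    (Ioi_mem_nhds (by linarith)) (Eventually.of_forall fun s => (int_FF hφ h.kP _ s x).1)
    (int_FF hφ h.kP _ t x) (int_FF hφ h.kS.lapl _ t x).1 ?_ (hφ.norm.mul_const _) ?_).2
  · refine ae_of_all _ fun y s hs => ?_
    have hs' : t / 2 < s := hs
    rw [norm_mul, norm_mul, norm_inv, norm_pow, Real.norm_of_nonneg (by linarith : (0:ℝ) ≤ s)]
    gcongr
    exact hC _
  · refine ae_of_all _ fun y s hs => ?_
    have hs' : t / 2 < s := hs
    exact (h.hasDerivAt (by linarith) (x - y)).const_mul (φ y)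

lemma FF_hasFDerivAt {n m : ℕ} {φ P : ES n → ℝ} (hφ : Integrable φ) (h : Ker P) {t : ℝ}
    (ht : 0 < t) (x : ES n) :
    HasFDerivAt (FF φ m P t) (∑ j, FF φ (m+1) (pd j P) t x • (EuclideanSpace.proj j : ES n →L[ℝ] ℝ)) x := by
  have hb : ∀ j, ∃ C, 0 ≤ C ∧ ∀ z, |pd j P z| ≤ C := fun j => (h.pd j).bdd
  choose C hC0 hC using hb
  let F' : ES n → ES n → (ES n →L[ℝ] ℝ) := fun x y =>
    ∑ j, (φ y * ((t ^ (m + 1 + n))⁻¹ * pd j P (t⁻¹ • (x - y)))) • (EuclideanSpace.proj j : ES n →L[ℝ] ℝ)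
  have e : ∑ j, FF φ (m+1) (pd j P) t x • (EuclideanSpace.proj j : ES n →L[ℝ] ℝ) = ∫ y, F' x y := by
    simp only [F']
    rw [integral_finsetSum]
    · refine Finset.sum_congr rfl fun j _ => ?_
      rw [integral_smul_const]; rfl
    · intro j _
      exact (int_FF hφ (h.pd j) _ t x).smul_const _
  have hF'i : Integrable (F' x) := by
    refine integrable_finsetSum (ι := Fin n) Finset.univ
      (f := fun j y => (φ y * ((t ^ (m + 1 + n))⁻¹ * pd j P (t⁻¹ • (x - y)))) • (EuclideanSpace.proj j : ES n →L[ℝ] ℝ)) ?_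
    intro j _
    exact (int_FF hφ (h.pd j) _ t x).smul_const _
  rw [e]
  refine hasFDerivAt_integral_of_dominated_of_fderiv_le (s := univ)
    (bound := fun y => ∑ j, ‖φ y‖ * ((t ^ (m + 1 + n))⁻¹ * C j) * ‖(EuclideanSpace.proj j : ES n →L[ℝ] ℝ)‖)
    univ_mem (Eventually.of_forall fun s => (int_FF hφ h _ t s).1)
    (int_FF hφ h _ t x) ?_ ?_ ?_ ?_
  · exact hF'i.1
  · refine ae_of_all _ fun y s _ => ?_
    refine norm_sum_le_of_le _ fun j _ => ?_
    rw [norm_smul, norm_mul, norm_mul, norm_inv, norm_pow, Real.norm_of_nonneg ht.le]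
    gcongr
    exact hC j _
  · exact integrable_finsetSum _ fun j _ => (hφ.norm.mul_const _).mul_const _
  · refine ae_of_all _ fun y s _ => ?_
    have h1 : HasFDerivAt (fun s : ES n => t⁻¹ • (s - y)) (t⁻¹ • ContinuousLinearMap.id ℝ (ES n)) s :=
      ((hasFDerivAt_id s).sub_const y).const_smul t⁻¹
    have h2 := (((smooth_da h.smooth (t⁻¹ • (s - y))).hasFDerivAt.comp s h1).const_mul
      ((t ^ (m + n))⁻¹)).const_mul (φ y)
    convert! h2 using 1
    ext v
    simp only [F', ContinuousLinearMap.sum_apply, ContinuousLinearMap.smul_apply,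
      ContinuousLinearMap.comp_apply, ContinuousLinearMap.id_apply, map_smul, smul_eq_mul]
    rw [fderiv_eq_sum, Finset.mul_sum, Finset.mul_sum, Finset.mul_sum]
    refine Finset.sum_congr rfl fun j _ => ?_
    have hpv : (EuclideanSpace.proj j : ES n →L[ℝ] ℝ) v = v j := rfl
    rw [hpv]
    rw [show m + 1 + n = m + n + 1 by ring, pow_succ, mul_inv]; ring

lemma FF_lip {n m : ℕ} {φ P : ES n → ℝ} (hφ : Integrable φ) (h : Ker P) :
    ∃ L, 0 ≤ L ∧ ∀ t, 0 < t → ∀ x x', |FF φ m P t x - FF φ m P t x'| ≤ L * (t ^ (m + n + 1))⁻¹ * dist x x' := by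
  obtain ⟨C, hC0, -, hC⟩ := h.lip
  refine ⟨(∫ y, ‖φ y‖) * C, mul_nonneg (integral_nonneg fun _ => norm_nonneg _) hC0, fun t ht x x' => ?_⟩
  unfold FF
  rw [← integral_sub (int_FF hφ h _ t x) (int_FF hφ h _ t x')]
  have : (∫ y, ‖φ y‖) * C * (t ^ (m + n + 1))⁻¹ * dist x x' =
      ∫ y, ‖φ y‖ * (C * (t ^ (m + n + 1))⁻¹ * dist x x') := by
    rw [integral_mul_const]; ring
  rw [this]
  rw [← Real.norm_eq_abs]
  refine norm_integral_le_of_norm_le (hφ.norm.mul_const _) (ae_of_all _ fun y => ?_)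
  rw [← mul_sub, norm_mul, ← mul_sub, norm_mul, norm_inv, norm_pow, Real.norm_of_nonneg ht.le]
  refine mul_le_mul_of_nonneg_left ?_ (norm_nonneg _)
  have := hC (t⁻¹ • (x - y)) (t⁻¹ • (x' - y))
  rw [← smul_sub, norm_smul, norm_inv, Real.norm_of_nonneg ht.le, sub_sub_sub_cancel_right, ← dist_eq_norm] at this
  calc _ ≤ (t ^ (m + n))⁻¹ * (C * (t⁻¹ * dist x x')) := by
        refine mul_le_mul_of_nonneg_left this (by positivity)
    _ = _ := by rw [pow_succ (n := m+n), mul_inv]; ring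

/-- weak form of `Δ φ = div a + b` -/
def WeakEq {n : ℕ} (Ω : Set (ES n)) (φ : ES n → ℝ) (a : Fin n → ES n → ℝ) (b : ES n → ℝ) : Prop :=
  ∀ ψ, IsTest Ω ψ → ∫ x, φ x * lapl ψ x = -(∑ i, ∫ x, a i x * pd i ψ x) + ∫ x, b x * ψ x

lemma pd_scale {n : ℕ} {f : ES n → ℝ} (hf : ContDiff ℝ ∞ f) (i : Fin n) (t : ℝ) (x y : ES n) :
    pd i (fun y => f (t⁻¹ • (x - y))) y = -t⁻¹ * pd i f (t⁻¹ • (x - y)) := by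
  have h1 : HasFDerivAt (fun y : ES n => t⁻¹ • (x - y)) (t⁻¹ • (-ContinuousLinearMap.id ℝ (ES n))) y :=
    ((hasFDerivAt_id y).const_sub x).const_smul t⁻¹
  have h2 := (smooth_da hf (t⁻¹ • (x - y))).hasFDerivAt.comp y h1
  have h3 : HasFDerivAt (fun y => f (t⁻¹ • (x - y))) _ y := h2
  unfold pd
  rw [h3.fderiv]
  simp

lemma lapl_scale {n : ℕ} {f : ES n → ℝ} (hf : ContDiff ℝ ∞ f) (t : ℝ) (x y : ES n) :
    lapl (fun y => f (t⁻¹ • (x - y))) y = (t ^ 2)⁻¹ * lapl f (t⁻¹ • (x - y)) := by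
  rw [lapl_eq, lapl_eq, Finset.mul_sum]
  refine Finset.sum_congr rfl fun i _ => ?_
  have e : pd i (fun y => f (t⁻¹ • (x - y))) = fun y => -t⁻¹ * pd i f (t⁻¹ • (x - y)) :=
    funext fun y => pd_scale hf i t x y
  have hs : ContDiff ℝ ∞ fun y => pd i f (t⁻¹ • (x - y)) :=
    (pd_contDiff i hf).comp (by fun_prop)
  rw [e, pd_const_mul i _ (smooth_da hs y), pd_scale (pd_contDiff i hf)]
  rw [← inv_pow]; ring

lemma Ker.isTest {n : ℕ} {Ω : Set (ES n)} {S : ES n → ℝ} (h : Ker S) {t : ℝ} (ht : 0 < t) {x : ES n}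
    (hx : Metric.closedBall x t ⊆ Ω) : IsTest Ω fun y => S (t⁻¹ • (x - y)) := by
  have hts : tsupport (fun y => S (t⁻¹ • (x - y))) ⊆ Metric.closedBall x t := by
    refine closure_minimal (fun y hy => ?_) Metric.isClosed_closedBall
    by_contra hc
    exact hy (h.scale_zero ht (by simpa using hc))
  exact ⟨h.smooth.comp (by fun_prop),
    (isCompact_closedBall _ _).of_isClosed_subset (isClosed_tsupport _) hts, hts.trans hx⟩

lemma weak_deriv {n m : ℕ} {Ω : Set (ES n)} {φ : ES n → ℝ} {a : Fin n → ES n → ℝ} {b : ES n → ℝ}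
    (hw : WeakEq Ω φ a b) {S : ES n → ℝ} (h : Ker S) {t : ℝ} (ht : 0 < t) {x : ES n}
    (hx : Metric.closedBall x t ⊆ Ω) :
    FF φ (m+1) (lapl S) t x =
      (t ^ m)⁻¹ * (∑ i, mol (a i) (pd i S) t x) + (t ^ m)⁻¹ * (t * mol b S t x) := by
  have := hw _ (h.isTest ht hx)
  simp only [lapl_scale h.smooth, pd_scale h.smooth] at this
  have e1 : ∫ y, φ y * ((t ^ 2)⁻¹ * lapl S (t⁻¹ • (x - y))) =
      (t ^ 2)⁻¹ * ∫ y, φ y * lapl S (t⁻¹ • (x - y)) := by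
    rw [← integral_const_mul]; congr 1; ext y; ring
  have e2 : ∀ i, ∫ y, a i y * (-t⁻¹ * pd i S (t⁻¹ • (x - y))) =
      -t⁻¹ * ∫ y, a i y * pd i S (t⁻¹ • (x - y)) := by
    intro i
    rw [← integral_const_mul]; congr 1; ext y; ring
  rw [e1] at this
  simp only [e2] at this
  rw [← Finset.mul_sum] at this
  rw [FF_eq_mol]
  unfold mol
  rw [← Finset.mul_sum]
  have e3 : ∫ y, φ y * lapl S (t⁻¹ • (x - y)) = t ^ 2 * (-(-t⁻¹ * ∑ i, ∫ y, a i y * pd i S (t⁻¹ • (x - y))) +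
    ∫ y, b y * S (t⁻¹ • (x - y))) := by rw [← this]; field_simp
  rw [e3, pow_succ]
  field_simp
  

lemma lim_of_deriv {f f' : ℝ → ℝ} {ρ α C : ℝ} (hρ : 0 < ρ) (hα : 0 < α)
    (hf : ∀ t, 0 < t → t ≤ ρ → HasDerivAt f (f' t) t)
    (hb : ∀ t, 0 < t → t ≤ ρ → |f' t| ≤ C * t ^ (α - 1)) :
    ∃ L, Tendsto f (𝓝[>] 0) (𝓝 L) ∧ ∀ t, 0 < t → t ≤ ρ → |f t - L| ≤ C / α * t ^ α := by
  have hC : 0 ≤ C := by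
    have h1 := (abs_nonneg _).trans (hb ρ hρ le_rfl)
    exact nonneg_of_mul_nonneg_left h1 (Real.rpow_pos_of_pos hρ _)
  have key : ∀ s t, 0 < s → s ≤ t → t ≤ ρ → |f t - f s| ≤ C / α * (t ^ α - s ^ α) := by
    intro s t hs hst htρ
    refine image_norm_le_of_norm_deriv_right_le_deriv_boundary' (f := fun r => f r - f s) (f' := f')
      (a := s) (b := t) (B := fun r => C / α * (r ^ α - s ^ α)) (B' := fun r => C * r ^ (α - 1))
      ?_ ?_ ?_ ?_ ?_ ?_ (right_mem_Icc.2 hst)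
    · intro r hr
      exact ((hf r (hs.trans_le hr.1) (hr.2.trans htρ)).continuousAt.sub continuousAt_const).continuousWithinAt
    · intro r hr
      exact ((hf r (hs.trans_le hr.1) (hr.2.le.trans htρ)).sub_const _).hasDerivWithinAt
    · simp
    · exact continuousOn_const.mul ((continuousOn_id.rpow_const fun r hr => Or.inr hα.le).sub continuousOn_const)
    · intro r hr
      have h1 := (((Real.hasDerivAt_rpow_const (p := α) (Or.inl (hs.trans_le hr.1).ne')).sub_const (s ^ α)).const_mul
        (C / α)).hasDerivWithinAt (s := Ici r)
      convert! h1 using 1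
      field_simp
    · intro r hr
      exact hb r (hs.trans_le hr.1) (hr.2.le.trans htρ)
  have key2 : ∀ s t, 0 < s → s ≤ t → t ≤ ρ → |f t - f s| ≤ C / α * t ^ α := by
    intro s t hs hst htρ
    refine (key s t hs hst htρ).trans (mul_le_mul_of_nonneg_left ?_ (div_nonneg hC hα.le))
    have := Real.rpow_nonneg hs.le α
    linarith
  have hcauchy : Cauchy (map f (𝓝[>] 0)) := by
    rw [Metric.cauchy_iff]
    refine ⟨inferInstance, fun ε hε => ?_⟩
    have hlim : Tendsto (fun t : ℝ => C / α * t ^ α) (𝓝[>] 0) (𝓝 0) := by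
      have : ContinuousAt (fun t : ℝ => C / α * t ^ α) 0 :=
        continuousAt_const.mul (Real.continuousAt_rpow_const _ _ (Or.inr hα.le))
      have h2 := this.tendsto
      rw [Real.zero_rpow hα.ne', mul_zero] at h2
      exact h2.mono_left nhdsWithin_le_nhds
    have hev : ∀ᶠ t in 𝓝[>] (0:ℝ), C / α * t ^ α < ε ∧ 0 < t ∧ t ≤ ρ := by
      filter_upwards [hlim.eventually_lt_const hε, self_mem_nhdsWithin,
        mem_nhdsWithin_of_mem_nhds (Iic_mem_nhds hρ)] with t h1 h2 h3 using ⟨h1, h2, h3⟩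
    refine ⟨f '' {t | C / α * t ^ α < ε ∧ 0 < t ∧ t ≤ ρ}, image_mem_map hev, ?_⟩
    rintro _ ⟨s, hs, rfl⟩ _ ⟨t, ht, rfl⟩
    rcases le_total s t with h | h
    · rw [dist_comm, Real.dist_eq]
      exact (key2 s t hs.2.1 h ht.2.2).trans_lt ht.1
    · rw [Real.dist_eq]
      exact (key2 t s ht.2.1 h hs.2.2).trans_lt hs.1
  obtain ⟨L, hL⟩ := cauchy_map_iff_exists_tendsto.1 hcauchy
  refine ⟨L, hL, fun t ht htρ => ?_⟩
  refine le_of_tendsto (f := fun s => |f t - f s|) (x := 𝓝[>] 0) ((tendsto_const_nhds.sub hL).abs) ?_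
  filter_upwards [self_mem_nhdsWithin, mem_nhdsWithin_of_mem_nhds (Iic_mem_nhds ht)] with s h1 h2
  exact key2 s t h1 h2 htρ

/-- averaged bound -/
def Av {n : ℕ} (x0 : ES n) (ρ : ℝ) (f Q : ES n → ℝ) (γ : ℝ) : Prop :=
  ∃ C, 0 ≤ C ∧ ∀ x ∈ Metric.ball x0 ρ, ∀ t, 0 < t → t ≤ ρ → |mol f Q t x| ≤ C * t ^ γ

lemma Av.mono {n : ℕ} {x0 : ES n} {ρ : ℝ} {f Q : ES n → ℝ} {γ γ' : ℝ} (h : Av x0 ρ f Q γ) (hρ : ρ ≤ 1)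
    (hg : γ' ≤ γ) : Av x0 ρ f Q γ' := by
  obtain ⟨C, hC, h⟩ := h
  refine ⟨C, hC, fun x hx t ht htρ => (h x hx t ht htρ).trans ?_⟩
  exact mul_le_mul_of_nonneg_left (Real.rpow_le_rpow_of_exponent_ge ht (htρ.trans hρ) hg) hC

lemma ball_dist {n : ℕ} {x0 x y : ES n} {ρ t : ℝ} (hx : x ∈ Metric.ball x0 ρ) (ht : t ≤ ρ)
    (hy : dist y x ≤ t) : y ∈ Metric.ball x0 (2 * ρ) := by
  rw [Metric.mem_ball] at *
  have := dist_triangle y x x0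
  linarith

lemma Av.of_bdd {n : ℕ} {x0 : ES n} {ρ : ℝ} {f Q : ES n → ℝ} (hQ : Ker Q) {M : ℝ}
    (hf : ∀ y ∈ Metric.ball x0 (2 * ρ), |f y| ≤ M) : Av x0 ρ f Q 0 := by
  refine ⟨|M| * ∫ z, |Q z|, mul_nonneg (abs_nonneg _) (integral_nonneg fun _ => abs_nonneg _), 
    fun x hx t ht htρ => ?_⟩
  rw [Real.rpow_zero, mul_one]
  exact mol_bound hQ ht fun y hy => (hf y (ball_dist hx htρ hy)).trans (le_abs_self _)

lemma Av.of_holder {n : ℕ} {x0 : ES n} {ρ : ℝ} {f Q : ES n → ℝ} (hQ : Ker Q) (hQ0 : ∫ z, Q z = 0)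
    {H α : ℝ} (hH : 0 ≤ H) (hα : 0 < α)
    (hf : ∀ x ∈ Metric.ball x0 (2 * ρ), ∀ y ∈ Metric.ball x0 (2 * ρ), |f x - f y| ≤ H * dist x y ^ α) :
    Av x0 ρ f Q α := by
  refine ⟨H * ∫ z, |Q z|, mul_nonneg hH (integral_nonneg fun _ => abs_nonneg _), 
    fun x hx t ht htρ => ?_⟩
  rw [mul_right_comm]
  refine mol_holder hQ hQ0 ht fun y hy => ?_
  refine (hf y (ball_dist hx htρ hy) x (ball_dist hx htρ (by simp [ht.le]))).trans ?_
  gcongr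

/-- limit of the scaled averages -/
def Lm {n : ℕ} (φ : ES n → ℝ) (m : ℕ) (P : ES n → ℝ) (x : ES n) : ℝ :=
  limUnder (𝓝[>] (0:ℝ)) fun t => FF φ m P t x

lemma rateX {n m : ℕ} {Ω : Set (ES n)} {φ : ES n → ℝ} {a : Fin n → ES n → ℝ} {b : ES n → ℝ}
    (hw : WeakEq Ω φ a b) (hφ : Integrable φ) {P S : ES n → ℝ} (h : Pair m P S) {x0 : ES n} {ρ α : ℝ}
    (hρ : 0 < ρ) (hα : 0 < α) (hball : Metric.ball x0 (2 * ρ) ⊆ Ω)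
    (ha : ∀ i, Av x0 ρ (a i) (pd i S) (m + α - 1)) (hb : Av x0 ρ b S (m + α - 2)) :
    ∃ C, 0 ≤ C ∧ ∀ x ∈ Metric.ball x0 ρ, Tendsto (fun t => FF φ m P t x) (𝓝[>] 0) (𝓝 (Lm φ m P x)) ∧
      ∀ t, 0 < t → t ≤ ρ → |FF φ m P t x - Lm φ m P x| ≤ C * t ^ α := by
  choose A hA0 hA using ha
  obtain ⟨B, hB0, hB⟩ := hb
  refine ⟨(∑ i, A i + B) / α, div_nonneg (add_nonneg (Finset.sum_nonneg fun i _ => hA0 i) hB0) hα.le,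
    fun x hx => ?_⟩
  obtain ⟨L, hL1, hL2⟩ := lim_of_deriv (f := fun t => FF φ m P t x)
    (f' := fun t => FF φ (m+1) (lapl S) t x) (C := ∑ i, A i + B) hρ hα
    (fun t ht _ => FF_hasDerivAt hφ h ht x) (by
      intro t ht htρ
      rw [weak_deriv hw h.kS ht fun y hy => hball (ball_dist hx htρ hy)]
      have e1 : (t ^ m)⁻¹ * t ^ ((m:ℝ) + α - 1) = t ^ (α - 1) := by
        rw [← Real.rpow_natCast, ← Real.rpow_neg ht.le, ← Real.rpow_add ht]; congr 1; ring
      have e2 : (t ^ m)⁻¹ * (t * t ^ ((m:ℝ) + α - 2)) = t ^ (α - 1) := by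
        rw [← e1]; congr 1
        rw [mul_comm, ← Real.rpow_add_one ht.ne']; congr 1; ring
      have hm : 0 < (t ^ m)⁻¹ := inv_pos.2 (pow_pos ht m)
      have f1 : |∑ i, mol (a i) (pd i S) t x| ≤ (∑ i, A i) * t ^ ((m:ℝ) + α - 1) := by
        rw [Finset.sum_mul]
        exact (Finset.abs_sum_le_sum_abs _ _).trans (Finset.sum_le_sum fun i _ => hA i x hx t ht htρ)
      have f2 := hB x hx t ht htρ
      refine (abs_add_le _ _).trans ?_
      rw [abs_mul, abs_mul _ (t * _), abs_mul t, abs_of_pos hm, abs_of_pos ht, add_mul, ← e1]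
      refine add_le_add ?_ ?_
      · calc _ ≤ (t ^ m)⁻¹ * ((∑ i, A i) * t ^ ((m:ℝ) + α - 1)) := mul_le_mul_of_nonneg_left f1 hm.le
          _ = _ := by ring
      · rw [e1, ← e2]
        calc _ ≤ (t ^ m)⁻¹ * (t * (B * t ^ ((m:ℝ) + α - 2))) := by gcongr
          _ = _ := by ring)
  have hLm : Lm φ m P x = L := hL1.limUnder_eq
  rw [hLm]
  exact ⟨hL1, hL2⟩

lemma holderX {n m : ℕ} {φ : ES n → ℝ} 
    (hφ : Integrable φ) {P : ES n → ℝ} (hP : Ker P) {x0 : ES n} {ρ α C : ℝ}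
    (hρ : 0 < ρ) (hα : 0 < α) (hC : 0 ≤ C)
    (h : ∀ x ∈ Metric.ball x0 ρ, ∀ t, 0 < t → t ≤ ρ → |FF φ m P t x - Lm φ m P x| ≤ C * t ^ α) :
    ∃ β H : ℝ, 0 < β ∧ β ≤ 1 ∧ 0 ≤ H ∧ ∀ x ∈ Metric.ball x0 ρ, ∀ y ∈ Metric.ball x0 ρ,
      |Lm φ m P x - Lm φ m P y| ≤ H * dist x y ^ β := by
  obtain ⟨L, hL0, hL⟩ := FF_lip (m := m) hφ hP
  set N : ℕ := m + n + 1 with hN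
  have hN0 : (0:ℝ) ≤ N := Nat.cast_nonneg _
  have hαN : 0 < α + N := by positivity
  set κ : ℝ := 1 / (α + N) with hκ
  have hκ0 : 0 < κ := by positivity
  have hκ1 : κ * (α + N) = 1 := by rw [hκ]; field_simp
  refine ⟨κ * α, (2 * (C * ρ ^ α) + L * (ρ ^ N)⁻¹ * (2 * ρ)) * ((2 * ρ) ^ (κ * α))⁻¹, by positivity,
    by nlinarith, by positivity, fun x hx y hy => ?_⟩
  rcases eq_or_ne x y with rfl | hxy
  · simp; positivity
  have hd : 0 < dist x y := dist_pos.2 hxy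
  have hd2 : dist x y < 2 * ρ := by
    have := dist_triangle_right x y x0
    rw [Metric.mem_ball] at hx hy; linarith
  set s : ℝ := dist x y / (2 * ρ) with hs
  have hs0 : 0 < s := by positivity
  have hs1 : s ≤ 1 := by rw [hs, div_le_one (by positivity)]; exact hd2.le
  have hds : dist x y = 2 * ρ * s := by rw [hs]; field_simp
  set t : ℝ := ρ * s ^ κ with ht
  have hsκ : 0 < s ^ κ := Real.rpow_pos_of_pos hs0 _
  have ht0 : 0 < t := by positivity
  have ht1 : t ≤ ρ := by
    have := Real.rpow_le_one hs0.le hs1 hκ0.le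
    nlinarith
  have h1 := h x hx t ht0 ht1
  have h2 := h y hy t ht0 ht1
  have h3 := hL t ht0 x y
  have tα : t ^ α = ρ ^ α * s ^ (κ * α) := by
    rw [ht, Real.mul_rpow hρ.le hsκ.le, ← Real.rpow_mul hs0.le]
  have tN : (t ^ N)⁻¹ * s = (ρ ^ N)⁻¹ * s ^ (κ * α) := by
    rw [ht, mul_pow, mul_inv, mul_assoc]; congr 1
    rw [← Real.rpow_natCast (s ^ κ), ← Real.rpow_mul hs0.le, ← Real.rpow_neg hs0.le, ← Real.rpow_add_one hs0.ne']
    congr 1; linarith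
  have dβ : ((2 * ρ) ^ (κ * α))⁻¹ * dist x y ^ (κ * α) = s ^ (κ * α) := by
    rw [hs, Real.div_rpow dist_nonneg (by positivity), div_eq_inv_mul]
  rw [mul_assoc _ _ (dist x y ^ _), dβ]
  have h4 : |Lm φ m P x - Lm φ m P y| ≤ C * t ^ α + L * (t ^ N)⁻¹ * dist x y + C * t ^ α := by
    rw [abs_le] at *
    constructor <;> linarith [h1.1, h1.2, h2.1, h2.2, h3.1, h3.2]
  refine h4.trans (le_of_eq ?_)
  rw [tα, hds]
  calc _ = 2 * (C * (ρ ^ α * s ^ (κ * α))) + L * (2 * ρ) * ((t ^ N)⁻¹ * s) := by ring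
    _ = _ := by rw [tN]; ring

/-- Holder continuous near a point -/
def LHat {n : ℕ} (f : ES n → ℝ) (x0 : ES n) : Prop :=
  ∃ r α H : ℝ, 0 < r ∧ 0 < α ∧ α ≤ 1 ∧ 0 ≤ H ∧ ∀ x ∈ Metric.ball x0 r, ∀ y ∈ Metric.ball x0 r,
    |f x - f y| ≤ H * dist x y ^ α

/-- bounded near a point -/
def LBat {n : ℕ} (f : ES n → ℝ) (x0 : ES n) : Prop :=
  ∃ r M : ℝ, 0 < r ∧ ∀ y ∈ Metric.ball x0 r, |f y| ≤ M

lemma LHat.continuousAt {n : ℕ} {f : ES n → ℝ} {x0 : ES n} (h : LHat f x0) : ContinuousAt f x0 := by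
  obtain ⟨r, α, H, hr, hα, -, hH, h⟩ := h
  rw [ContinuousAt, tendsto_iff_dist_tendsto_zero]
  have h0 : Tendsto (fun y => H * dist y x0 ^ α) (𝓝 x0) (𝓝 0) := by
    have : ContinuousAt (fun y => H * dist y x0 ^ α) x0 :=
      continuousAt_const.mul ((continuousAt_id.dist continuousAt_const).rpow_const (Or.inr hα.le))
    have h2 := this.tendsto
    simpa [Real.zero_rpow hα.ne'] using h2
  refine squeeze_zero' (Eventually.of_forall fun _ => dist_nonneg) ?_ h0
  filter_upwards [Metric.ball_mem_nhds x0 hr] with y hy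
  exact h y hy x0 (Metric.mem_ball_self hr)

lemma LBat.of_continuousAt {n : ℕ} {f : ES n → ℝ} {x0 : ES n} (h : ContinuousAt f x0) : LBat f x0 := by
  obtain ⟨r, hr, h2⟩ := Metric.continuousAt_iff.1 h 1 one_pos
  refine ⟨r, |f x0| + 1, hr, fun y hy => ?_⟩
  have := h2 hy
  rw [Real.dist_eq] at this
  have := abs_sub_abs_le_abs_sub (f y) (f x0)
  linarith

lemma LHat.bdd {n : ℕ} {f : ES n → ℝ} {x0 : ES n} (h : LHat f x0) : LBat f x0 :=
  LBat.of_continuousAt h.continuousAt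

lemma LHat.of_C1 {n : ℕ} {f : ES n → ℝ} {x0 : ES n} (h : ContDiffAt ℝ 1 f x0) : LHat f x0 := by
  obtain ⟨K, t, ht, hK⟩ := h.exists_lipschitzOnWith
  obtain ⟨r, hr, hrt⟩ := Metric.mem_nhds_iff.1 ht
  refine ⟨r, 1, K, hr, one_pos, le_rfl, K.2, fun x hx y hy => ?_⟩
  rw [Real.rpow_one, ← Real.dist_eq]
  exact hK.dist_le_mul x (hrt hx) y (hrt hy)

lemma holder_weaken {d α β : ℝ} (hd : 0 ≤ d) (hd1 : d ≤ 1) (hβ : 0 < β) (h : β ≤ α) : d ^ α ≤ d ^ β := by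
  rcases hd.eq_or_lt with rfl | hd
  · rw [Real.zero_rpow hβ.ne', Real.zero_rpow (hβ.trans_le h).ne']
  · exact Real.rpow_le_rpow_of_exponent_ge hd hd1 h

/-- common radius and exponent -/
lemma LHat.two {n : ℕ} {f g : ES n → ℝ} {x0 : ES n} (hf : LHat f x0) (hg : LHat g x0) :
    ∃ r α H1 H2 M : ℝ, 0 < r ∧ 0 < α ∧ α ≤ 1 ∧ 0 ≤ H1 ∧ 0 ≤ H2 ∧ 0 ≤ M ∧
    ∀ x ∈ Metric.ball x0 r, ∀ y ∈ Metric.ball x0 r, 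
    |f x - f y| ≤ H1 * dist x y ^ α ∧ |g x - g y| ≤ H2 * dist x y ^ α ∧ |f x| ≤ M ∧ |g y| ≤ M := by
  obtain ⟨r1, α1, H1, hr1, hα1, hα1', hH1, h1⟩ := id hf
  obtain ⟨r2, α2, H2, hr2, hα2, hα2', hH2, h2⟩ := id hg
  obtain ⟨r3, M1, hr3, h3⟩ := hf.bdd
  obtain ⟨r4, M2, hr4, h4⟩ := hg.bdd
  refine ⟨min (min r1 r2) (min (min r3 r4) (1/2)), min α1 α2, H1, H2, max (max M1 M2) 0, by positivity, lt_min hα1 hα2,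
    (min_le_left _ _).trans hα1', hH1, hH2, le_max_right _ _, fun x hx y hy => ?_⟩
  simp only [Metric.mem_ball, lt_min_iff] at hx hy
  have hd1 : dist x y ≤ 1 := by
    have := dist_triangle_right x y x0
    linarith [hx.2.2, hy.2.2]
  refine ⟨(h1 x hx.1.1 y hy.1.1).trans (mul_le_mul_of_nonneg_left (holder_weaken dist_nonneg hd1 (lt_min hα1 hα2) (min_le_left _ _)) hH1),
    (h2 x hx.1.2 y hy.1.2).trans (mul_le_mul_of_nonneg_left (holder_weaken dist_nonneg hd1 (lt_min hα1 hα2) (min_le_right _ _)) hH2),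
    (h3 x hx.2.1.1).trans ((le_max_left _ _).trans (le_max_left _ _)),
    (h4 y hy.2.1.2).trans ((le_max_right _ _).trans (le_max_left _ _))⟩

lemma LHat.add {n : ℕ} {f g : ES n → ℝ} {x0 : ES n} (hf : LHat f x0) (hg : LHat g x0) :
    LHat (fun x => f x + g x) x0 := by
  obtain ⟨r, α, H1, H2, M, hr, hα, hα1, hH1, hH2, hM, h⟩ := hf.two hg
  refine ⟨r, α, H1 + H2, hr, hα, hα1, by positivity, fun x hx y hy => ?_⟩
  obtain ⟨a1, a2, -, -⟩ := h x hx y hy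
  rw [add_sub_add_comm, add_mul]
  exact (abs_add_le _ _).trans (add_le_add a1 a2)

lemma LHat.mul {n : ℕ} {f g : ES n → ℝ} {x0 : ES n} (hf : LHat f x0) (hg : LHat g x0) :
    LHat (fun x => f x * g x) x0 := by
  obtain ⟨r, α, H1, H2, M, hr, hα, hα1, hH1, hH2, hM, h⟩ := hf.two hg
  refine ⟨r, α, M * H2 + H1 * M, hr, hα, hα1, by positivity, fun x hx y hy => ?_⟩
  obtain ⟨a1, a2, a3, a4⟩ := h x hx y hy
  have : f x * g x - f y * g y = f x * (g x - g y) + (f x - f y) * g y := by ring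
  rw [this]
  refine (abs_add_le _ _).trans ?_
  rw [abs_mul, abs_mul]
  calc _ ≤ M * (H2 * dist x y ^ α) + (H1 * dist x y ^ α) * M := by gcongr
    _ = _ := by ring

lemma LHat.const {n : ℕ} (c : ℝ) (x0 : ES n) : LHat (fun _ => c) x0 := LHat.of_C1 contDiffAt_const

lemma LHat.sum {n : ℕ} {ι : Type*} (s : Finset ι) {f : ι → ES n → ℝ} {x0 : ES n} (hf : ∀ i, LHat (f i) x0) :
    LHat (fun x => ∑ i ∈ s, f i x) x0 := by
  classical
  induction s using Finset.induction_on with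
  | empty => simpa using LHat.const 0 x0
  | insert i s hi ih => simpa only [Finset.sum_insert hi] using (hf i).add ih

lemma LHat.congr {n : ℕ} {f g : ES n → ℝ} {x0 : ES n} (hf : LHat f x0) (h : f =ᶠ[𝓝 x0] g) : LHat g x0 := by
  obtain ⟨r, α, H, hr, hα, hα1, hH, h1⟩ := hf
  obtain ⟨r', hr', h2⟩ := Metric.eventually_nhds_iff_ball.1 h
  refine ⟨min r r', α, H, lt_min hr hr', hα, hα1, hH, fun x hx y hy => ?_⟩
  rw [← h2 x (Metric.ball_subset_ball (min_le_right _ _) hx), ← h2 y (Metric.ball_subset_ball (min_le_right _ _) hy)]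
  exact h1 x (Metric.ball_subset_ball (min_le_left _ _) hx) y (Metric.ball_subset_ball (min_le_left _ _) hy)

lemma LHat.av {n : ℕ} {f : ES n → ℝ} {x0 : ES n} (hf : LHat f x0) :
    ∃ r α : ℝ, 0 < r ∧ 0 < α ∧ α ≤ 1 ∧ ∀ ρ, ρ ≤ r → ∀ Q : ES n → ℝ, Ker Q → ∫ z, Q z = 0 →
      Av x0 ρ f Q α := by
  obtain ⟨r, α, H, hr, hα, hα1, hH, h1⟩ := hf
  refine ⟨r / 2, α, by positivity, hα, hα1, fun ρ hρ Q hQ hQ0 => Av.of_holder hQ hQ0 hH hα ?_⟩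
  intro x hx y hy
  exact h1 x (Metric.ball_subset_ball (by linarith) hx) y (Metric.ball_subset_ball (by linarith) hy)

lemma LBat.av {n : ℕ} {f : ES n → ℝ} {x0 : ES n} (hf : LBat f x0) :
    ∃ r : ℝ, 0 < r ∧ ∀ ρ, ρ ≤ r → ∀ Q : ES n → ℝ, Ker Q → Av x0 ρ f Q 0 := by
  obtain ⟨r, M, hr, h1⟩ := hf
  refine ⟨r / 2, by positivity, fun ρ hρ Q hQ => Av.of_bdd hQ (M := M) ?_⟩
  intro y hy
  exact h1 y (Metric.ball_subset_ball (by linarith) hy)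

/-- uniform rate of convergence near a point -/
def Rate {n : ℕ} (φ : ES n → ℝ) (m : ℕ) (P : ES n → ℝ) (x0 : ES n) : Prop :=
  ∃ ρ α C : ℝ, 0 < ρ ∧ 0 < α ∧ 0 ≤ C ∧ ∀ x ∈ Metric.ball x0 ρ,
    Tendsto (fun t => FF φ m P t x) (𝓝[>] 0) (𝓝 (Lm φ m P x)) ∧
      ∀ t, 0 < t → t ≤ ρ → |FF φ m P t x - Lm φ m P x| ≤ C * t ^ α

lemma Rate.lh {n m : ℕ} {φ P : ES n → ℝ} {x0 : ES n} (hφ : Integrable φ) (hP : Ker P)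
    (h : Rate φ m P x0) : LHat (Lm φ m P) x0 := by
  obtain ⟨ρ, α, C, hρ, hα, hC, h⟩ := h
  obtain ⟨β, H, h1, h2, h3, h4⟩ := holderX hφ hP hρ hα hC fun x hx => (h x hx).2
  exact ⟨ρ, β, H, hρ, h1, h2, h3, h4⟩

lemma open_rad {n : ℕ} {Ω : Set (ES n)} (hΩ : IsOpen Ω) {x0 : ES n} (hx : x0 ∈ Ω) :
    ∃ r, 0 < r ∧ ∀ ρ, ρ ≤ r → Metric.ball x0 (2 * ρ) ⊆ Ω := by
  obtain ⟨r, hr, h⟩ := Metric.isOpen_iff.1 hΩ x0 hx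
  exact ⟨r/2, by positivity, fun ρ hρ => (Metric.ball_subset_ball (by linarith)).trans h⟩

lemma exists_small {n : ℕ} (r : Fin n → ℝ) (hr : ∀ i, 0 < r i) : ∃ ρ, 0 < ρ ∧ ∀ i, ρ ≤ r i := by
  have h : ∀ᶠ ρ in 𝓝[>] (0:ℝ), ∀ i, ρ ≤ r i :=
    eventually_all.2 fun i => mem_nhdsWithin_of_mem_nhds (Iic_mem_nhds (hr i))
  obtain ⟨ρ, h1, h2⟩ := (h.and self_mem_nhdsWithin).exists
  exact ⟨ρ, h2, h1⟩

lemma rate0 {n : ℕ} {Ω : Set (ES n)} (hΩ : IsOpen Ω) {φ : ES n → ℝ} {a : Fin n → ES n → ℝ} {b : ES n → ℝ}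
    (hw : WeakEq Ω φ a b) (hφ : Integrable φ) {P S : ES n → ℝ} (h : Pair 0 P S) {x0 : ES n}
    (hx : x0 ∈ Ω) (ha : ∀ i, LBat (a i) x0) (hb : LBat b x0) : Rate φ 0 P x0 := by
  choose r hr har using fun i => (ha i).av
  obtain ⟨r1, hr1, h1⟩ := exists_small r hr
  obtain ⟨r2, hr2, h2⟩ := hb.av
  obtain ⟨r3, hr3, h3⟩ := open_rad hΩ hx
  set ρ := min (min r1 1) (min r2 r3) with hρd
  have hρ : 0 < ρ := by positivity
  have hρ1 : ρ ≤ r1 := (min_le_left _ _).trans (min_le_left _ _)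
  have hρ2 : ρ ≤ r2 := (min_le_right _ _).trans (min_le_left _ _)
  have hρ3 : ρ ≤ r3 := (min_le_right _ _).trans (min_le_right _ _)
  have hρ4 : ρ ≤ 1 := (min_le_left _ _).trans (min_le_right _ _)
  obtain ⟨C, hC, hh⟩ := rateX hw hφ h hρ one_pos (h3 ρ hρ3)
    (fun i => (har i ρ (hρ1.trans (h1 i)) _ (h.kS.pd i)).mono hρ4 (by simp))
    ((h2 ρ hρ2 _ h.kS).mono hρ4 (by norm_num))
  exact ⟨ρ, 1, C, hρ, one_pos, hC, hh⟩

lemma rate1 {n : ℕ} {Ω : Set (ES n)} (hΩ : IsOpen Ω) {φ : ES n → ℝ} {a : Fin n → ES n → ℝ} {b : ES n → ℝ}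
    (hw : WeakEq Ω φ a b) (hφ : Integrable φ) {P S : ES n → ℝ} (h : Pair 1 P S) {x0 : ES n}
    (hx : x0 ∈ Ω) (ha : ∀ i, LHat (a i) x0) (hb : LBat b x0) : Rate φ 1 P x0 := by
  choose r α hr hα hα1 har using fun i => (ha i).av
  obtain ⟨r1, hr1, h1⟩ := exists_small r hr
  obtain ⟨α0', hα0', h0'⟩ := exists_small α hα
  set α0 := min α0' 1
  have hα0 : 0 < α0 := by positivity
  have h0 : ∀ i, α0 ≤ α i := fun i => (min_le_left _ _).trans (h0' i)
  have h01 : α0 ≤ 1 := min_le_right _ _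
  obtain ⟨r2, hr2, h2⟩ := hb.av
  obtain ⟨r3, hr3, h3⟩ := open_rad hΩ hx
  set ρ := min (min r1 1) (min r2 r3) with hρd
  have hρ : 0 < ρ := by positivity
  have hρ1 : ρ ≤ r1 := (min_le_left _ _).trans (min_le_left _ _)
  have hρ2 : ρ ≤ r2 := (min_le_right _ _).trans (min_le_left _ _)
  have hρ3 : ρ ≤ r3 := (min_le_right _ _).trans (min_le_right _ _)
  have hρ4 : ρ ≤ 1 := (min_le_left _ _).trans (min_le_right _ _)
  obtain ⟨C, hC, hh⟩ := rateX hw hφ h hρ hα0 (h3 ρ hρ3)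
    (fun i => (har i ρ (hρ1.trans (h1 i)) _ (h.kS.pd i) (h.kS.int_pd i)).mono hρ4 (by simpa using h0 i))
    ((h2 ρ hρ2 _ h.kS).mono hρ4 (by norm_num; linarith))
  exact ⟨ρ, α0, C, hρ, hα0, hC, hh⟩

lemma rate2 {n : ℕ} {Ω : Set (ES n)} (hΩ : IsOpen Ω) {φ : ES n → ℝ} {b : ES n → ℝ}
    (hw : WeakEq Ω φ (fun _ _ => 0) b) (hφ : Integrable φ) {P S : ES n → ℝ} (h : Pair 2 P S)
    (hS : ∫ z, S z = 0) {x0 : ES n}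
    (hx : x0 ∈ Ω) (hb : LHat b x0) : Rate φ 2 P x0 := by
  obtain ⟨r2, α, hr2, hα, hα1, h2⟩ := hb.av
  obtain ⟨r3, hr3, h3⟩ := open_rad hΩ hx
  set ρ := min r2 r3 with hρd
  have hρ : 0 < ρ := by positivity
  have hρ2 : ρ ≤ r2 := (min_le_left _ _)
  have hρ3 : ρ ≤ r3 := (min_le_right _ _)
  obtain ⟨C, hC, hh⟩ := rateX hw hφ h hρ hα (h3 ρ hρ3)
    (fun i => ⟨0, le_rfl, fun x hx t ht htρ => by simp [mol]⟩)
    (by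
      have := h2 ρ hρ2 _ h.kS hS
      convert this using 1
      push_cast; ring)
  exact ⟨ρ, α, C, hρ, hα, hC, hh⟩

lemma deriv_of_rate {n m : ℕ} {φ P g : ES n → ℝ} (hφ : Integrable φ) (hP : Ker P) {x0 : ES n} {r : ℝ} (hr : 0 < r)
    (hg : ∀ x ∈ Metric.ball x0 r, Tendsto (fun t => FF φ m P t x) (𝓝[>] 0) (𝓝 (g x)))
    (h : ∀ j, Rate φ (m+1) (pd j P) x0) :
    HasFDerivAt g (∑ j, Lm φ (m+1) (pd j P) x0 • (EuclideanSpace.proj j : ES n →L[ℝ] ℝ)) x0 := by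
  choose ρ α C hρ hα hC h using h
  obtain ⟨ρ1, hρ1, hle⟩ := exists_small ρ hρ
  set ρ0 := min ρ1 r
  have hρ0 : 0 < ρ0 := by positivity
  let T : ℕ → ℝ := fun k => ρ0 / (k + 1)
  have hT0 : ∀ k, 0 < T k := fun k => by positivity
  have hTρ : ∀ k, T k ≤ ρ0 := fun k => div_le_self hρ0.le (by linarith [k.cast_nonneg (α := ℝ)])
  have hTl : Tendsto T atTop (𝓝 0) := tendsto_const_div_atTop_nhds_zero_nat ρ0 |>.comp (tendsto_add_atTop_nat 1)
    |>.congr fun k => by simp [T]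
  have hTl' : Tendsto T atTop (𝓝[>] 0) := tendsto_nhdsWithin_iff.2 ⟨hTl, Eventually.of_forall hT0⟩
  refine hasFDerivAt_of_tendstoUniformlyOn (l := atTop) (f := fun k => FF φ m P (T k))
    (g' := fun x => ∑ j, Lm φ (m+1) (pd j P) x • (EuclideanSpace.proj j : ES n →L[ℝ] ℝ))
    (f' := fun k x => ∑ j, FF φ (m+1) (pd j P) (T k) x • (EuclideanSpace.proj j : ES n →L[ℝ] ℝ))
    (Metric.isOpen_ball (x := x0) (ε := ρ0)) ?_ ?_ ?_ (Metric.mem_ball_self hρ0)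
  · rw [Metric.tendstoUniformlyOn_iff]
    intro ε hε
    have hlim : Tendsto (fun k => ∑ j, C j * T k ^ α j * ‖(EuclideanSpace.proj j : ES n →L[ℝ] ℝ)‖) atTop (𝓝 0) := by
      have : (0:ℝ) = ∑ j : Fin n, C j * 0 ^ α j * ‖(EuclideanSpace.proj j : ES n →L[ℝ] ℝ)‖ := by
        symm; apply Finset.sum_eq_zero; intro j _; rw [Real.zero_rpow (hα j).ne']; simp
      rw [this]
      refine tendsto_finsetSum _ fun j _ => ?_
      refine (tendsto_const_nhds.mul ?_).mul_const _
      exact hTl.rpow_const (Or.inr (hα j).le)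
    filter_upwards [hlim.eventually_lt_const hε] with k hk x hx
    refine lt_of_le_of_lt ?_ hk
    rw [dist_comm, dist_eq_norm, ← Finset.sum_sub_distrib]
    refine norm_sum_le_of_le _ fun j _ => ?_
    rw [← sub_smul, norm_smul]
    refine mul_le_mul_of_nonneg_right ?_ (norm_nonneg _)
    exact (h j x (Metric.ball_subset_ball ((min_le_left _ _).trans (hle j)) hx)).2 (T k) (hT0 k)
      ((hTρ k).trans ((min_le_left _ _).trans (hle j)))
  · intro k x _
    exact FF_hasFDerivAt hφ hP (hT0 k) x
  · intro x hx
    exact (hg x (Metric.ball_subset_ball (min_le_right _ _) hx)).comp hTl'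

lemma FF_tendsto_of_cont {n : ℕ} {φ η : ES n → ℝ} (hφ : Integrable φ) (hη : Ker η) (h1 : ∫ z, η z = 1) {x : ES n}
    (hx : ContinuousAt φ x) : Tendsto (fun t => FF φ 0 η t x) (𝓝[>] 0) (𝓝 (φ x)) := by
  rw [Metric.tendsto_nhds]
  intro ε hε
  set A := ∫ z, |η z|
  have hA : 0 ≤ A := integral_nonneg fun _ => abs_nonneg _
  obtain ⟨r, hr, h⟩ := Metric.continuousAt_iff.1 hx (ε / (A + 1)) (by positivity)
  filter_upwards [self_mem_nhdsWithin, mem_nhdsWithin_of_mem_nhds (Iio_mem_nhds hr)] with t ht htr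
  have ht : 0 < t := ht
  have hi : Integrable fun y => φ y * η (t⁻¹ • (x - y)) := by
    simpa using int_FF hφ hη 1 t x
  have := mol_bound (f := fun y => φ y - φ x) hη ht (M := ε / (A + 1)) (x := x) (fun y hy => by
    have := h (hy.trans_lt htr)
    rw [Real.dist_eq] at this; exact this.le)
  rw [mol_sub_const hη ht hi, h1, mul_one] at this
  rw [FF_eq_mol, Real.dist_eq]
  simp only [pow_zero, inv_one, one_mul]
  refine this.trans_lt ?_
  rw [div_mul_eq_mul_div, div_lt_iff₀ (by positivity)]
  nlinarith

lemma FF_tendsto_ae {n : ℕ} {φ η : ES n → ℝ} (hφ : Integrable φ) (hη : Ker η) (h1 : ∫ z, η z = 1) :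
    ∀ᵐ x, Tendsto (fun t => FF φ 0 η t x) (𝓝[>] 0) (𝓝 (φ x)) := by
  obtain ⟨C, hC0, hC⟩ := hη.bdd
  filter_upwards [IsUnifLocDoublingMeasure.ae_tendsto_average_norm_sub volume hφ.locallyIntegrable 1] with x hx
  have h := hx (fun _ : ℝ => x) (fun t => t) (l := 𝓝[>] 0) tendsto_id (by
    filter_upwards [self_mem_nhdsWithin] with t ht
    have ht : 0 < t := ht
    simp [ht.le])
  rw [tendsto_iff_dist_tendsto_zero]
  set V := volume.real (Metric.closedBall (0 : ES n) 1)
  have h2 := h.const_mul (C * V)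
  rw [mul_zero] at h2
  refine squeeze_zero' (Eventually.of_forall fun _ => dist_nonneg) ?_ h2
  filter_upwards [self_mem_nhdsWithin] with t ht
  have ht : 0 < t := ht
  have htn : 0 < t ^ n := pow_pos ht n
  have hi : Integrable fun y => φ y * η (t⁻¹ • (x - y)) := by
    simpa using int_FF hφ hη 1 t x
  have e1 : FF φ 0 η t x - φ x = mol (fun y => φ y - φ x) η t x := by
    rw [mol_sub_const hη ht hi, h1, mul_one, FF_eq_mol]; simp
  have hV : 0 < V := by
    apply ENNReal.toReal_pos
    · exact (Metric.measure_closedBall_pos volume _ one_pos).ne'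
    · exact measure_closedBall_lt_top.ne
  have hvol : volume.real (Metric.closedBall x t) = t ^ n * V := by
    rw [Measure.addHaar_real_closedBall' volume x ht.le]
    simp [V]
  rw [Real.dist_eq, e1, setAverage_eq, hvol]
  unfold mol
  rw [abs_mul, abs_of_pos (inv_pos.2 htn), smul_eq_mul, mul_inv]
  have hint : IntegrableOn (fun y => ‖φ y - φ x‖) (Metric.closedBall x t) :=
    (hφ.integrableOn.sub (integrableOn_const measure_closedBall_lt_top.ne)).norm
  have h3 : |∫ y, (φ y - φ x) * η (t⁻¹ • (x - y))| ≤ C * ∫ y in Metric.closedBall x t, ‖φ y - φ x‖ := by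
    rw [← integral_const_mul, ← integral_indicator Metric.isClosed_closedBall.measurableSet, ← Real.norm_eq_abs]
    refine norm_integral_le_of_norm_le ((integrable_indicator_iff Metric.isClosed_closedBall.measurableSet).2 (hint.const_mul C)) (ae_of_all _ fun y => ?_)
    by_cases hy : y ∈ Metric.closedBall x t
    · rw [indicator_of_mem hy, norm_mul, mul_comm]
      exact mul_le_mul_of_nonneg_right (hC _) (norm_nonneg _)
    · rw [indicator_of_notMem hy, hη.scale_zero ht (by simpa using hy)]; simp
  calc _ ≤ (t ^ n)⁻¹ * (C * ∫ y in Metric.closedBall x t, ‖φ y - φ x‖) := by gcongr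
    _ = _ := by field_simp

lemma int_cs {n : ℕ} {φ f : ES n → ℝ} (hφ : Integrable φ) (hf : Continuous f) (hc : HasCompactSupport f) :
    Integrable (fun x => φ x * f x) := by
  have := hφ.locallyIntegrable.integrable_smul_right_of_hasCompactSupport hf hc
  simpa using this

lemma weakEq_of_Ladj {n : ℕ} {Ω : Set (ES n)} (hΩ : IsOpen Ω) {u : ES n → ES n}
    (hu : ∀ x ∈ Ω, ContDiffAt ℝ 1 u x) {φ h : ES n → ℝ} (hφ : Integrable φ)
    (hh : ∀ ψ, IsTest Ω ψ → Integrable (fun x => h x * ψ x))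
    (hw : ∀ ψ, IsTest Ω ψ → ∫ x, φ x * Ladj u ψ x = - ∫ x, h x * ψ x) :
    WeakEq Ω φ (fun i x => φ x * u x i) (fun x => -(φ x * dvg u x + h x)) := by
  intro ψ hψ
  have hui : ∀ i, ContinuousOn (fun x => u x i) Ω := fun i => cont_of_cda fun x hx => cda_coord (hu x hx) i
  have i1 : ∀ i ∈ (Finset.univ : Finset (Fin n)), Integrable (fun x => φ x * u x i * pd i ψ x) := by
    intro i _
    simp only [mul_assoc]
    exact int_cs hφ (cont_mul hΩ (hui i) (hψ.pd i).smooth.continuous (hψ.pd i).sub) (hψ.pd i).cs.mul_left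
  have i2 : Integrable (fun x => φ x * dvg u x * ψ x) := by
    simp only [mul_assoc]
    exact int_cs hφ (cont_mul hΩ (dvg_cont hu) hψ.smooth.continuous hψ.sub) hψ.cs.mul_left
  have i3 := int_cs hφ (Ladj_cont hΩ hu hψ) (Ladj_cs (u := u) hψ)
  have e1 : ∀ x, φ x * lapl ψ x = (φ x * Ladj u ψ x - ∑ i, φ x * u x i * pd i ψ x) - φ x * dvg u x * ψ x := by
    intro x
    unfold Ladj
    rw [fderiv_eq_sum, mul_add, mul_add, Finset.mul_sum]
    simp only [mul_assoc]
    ring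
  have e2 : ∀ x, -(φ x * dvg u x + h x) * ψ x = -(φ x * dvg u x * ψ x) - h x * ψ x := fun x => by ring
  simp only [e1, e2]
  have i4 : Integrable (fun x => φ x * Ladj u ψ x - ∑ i, φ x * u x i * pd i ψ x) :=
    i3.sub (integrable_finsetSum _ i1)
  have i5 : Integrable (fun x => -(φ x * dvg u x * ψ x)) := i2.neg
  rw [integral_sub i4 i2, integral_sub i3 (integrable_finsetSum _ i1),
    integral_finsetSum _ i1, hw ψ hψ, integral_sub i5 (hh ψ hψ), integral_neg]
  ring

lemma ladj_congr {n : ℕ} {Ω : Set (ES n)} {u : ES n → ES n} {φ φ' h h' : ES n → ℝ} (hφ : φ' =ᵐ[volume] φ)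
    (hh : ∀ᵐ x, x ∈ Ω → h' x = h x)
    (hw : ∀ ψ, IsTest Ω ψ → ∫ x, φ x * Ladj u ψ x = - ∫ x, h x * ψ x) :
    ∀ ψ, IsTest Ω ψ → ∫ x, φ' x * Ladj u ψ x = - ∫ x, h' x * ψ x := by
  intro ψ hψ
  have e1 : ∫ x, φ' x * Ladj u ψ x = ∫ x, φ x * Ladj u ψ x :=
    integral_congr_ae (by filter_upwards [hφ] with x hx; rw [hx])
  have e2 : ∫ x, h' x * ψ x = ∫ x, h x * ψ x := by
    refine integral_congr_ae ?_
    filter_upwards [hh] with x hx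
    by_cases h : x ∈ Ω
    · rw [hx h]
    · rw [image_eq_zero_of_notMem_tsupport fun h2 => h (hψ.sub h2)]; simp
  rw [e1, e2, hw ψ hψ]

lemma reg0 {n : ℕ} {Ω : Set (ES n)} (hΩ : IsOpen Ω) {φ : ES n → ℝ} {a : Fin n → ES n → ℝ} {b : ES n → ℝ}
    (hw : WeakEq Ω φ a b) (hφ : Integrable φ) (h0 : ∀ x, x ∉ Ω → φ x = 0)
    (ha : ∀ x ∈ Ω, ∀ i, LBat (a i) x) (hb : ∀ x ∈ Ω, LBat b x) :
    ∃ φ' : ES n → ℝ, φ' =ᵐ[volume] φ ∧ Measurable φ' ∧ (∀ x, x ∉ Ω → φ' x = 0) ∧ ∀ x ∈ Ω, LHat φ' x := by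
  obtain ⟨η, K, hp, h1⟩ := exists_pair n
  have hr : ∀ x ∈ Ω, Rate φ 0 η x := fun x hx => rate0 hΩ hw hφ hp hx (ha x hx) (hb x hx)
  have hl : ∀ x ∈ Ω, LHat (Lm φ 0 η) x := fun x hx => (hr x hx).lh hφ hp.kP
  refine ⟨Ω.indicator (Lm φ 0 η), ?_, ?_, ?_, ?_⟩
  · filter_upwards [FF_tendsto_ae hφ hp.kP h1] with x hx
    by_cases h : x ∈ Ω
    · rw [indicator_of_mem h]
      obtain ⟨ρ, α, C, hρ, -, -, h2⟩ := hr x h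
      exact tendsto_nhds_unique (h2 x (Metric.mem_ball_self hρ)).1 hx
    · rw [indicator_of_notMem h, h0 x h]
  · exact meas_indicator hΩ fun x hx => (hl x hx).continuousAt.continuousWithinAt
  · intro x hx; exact indicator_of_notMem hx _
  · intro x hx
    refine (hl x hx).congr ?_
    filter_upwards [hΩ.mem_nhds hx] with y hy
    rw [indicator_of_mem hy]

lemma c1_of {n : ℕ} {Ω : Set (ES n)} (hΩ : IsOpen Ω) {g : ES n → ℝ} {p : Fin n → ES n → ℝ}
    (h : ∀ x ∈ Ω, HasFDerivAt g (∑ j, p j x • (EuclideanSpace.proj j : ES n →L[ℝ] ℝ)) x)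
    {m : ℕ} (hp : ∀ x ∈ Ω, ∀ j, ContDiffAt ℝ m (p j) x) :
    (∀ x ∈ Ω, ContDiffAt ℝ ((m + 1 : ℕ)) g x) ∧ ∀ x ∈ Ω, ∀ j, pd j g x = p j x := by
  constructor
  · intro x hx
    have := (contDiffAt_succ_iff_hasFDerivAt (𝕜 := ℝ) (f := g) (x := x) (n := m)).2
      ⟨fun x => ∑ j, p j x • (EuclideanSpace.proj j : ES n →L[ℝ] ℝ), ⟨Ω, hΩ.mem_nhds hx, h⟩,
        ContDiffAt.sum fun j _ => (hp x hx j).smul contDiffAt_const⟩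
    exact_mod_cast this
  · intro x hx j
    unfold pd
    rw [(h x hx).fderiv]
    simp [Pi.single_apply]

lemma reg1 {n : ℕ} {Ω : Set (ES n)} (hΩ : IsOpen Ω) {φ : ES n → ℝ} {a : Fin n → ES n → ℝ} {b : ES n → ℝ}
    (hw : WeakEq Ω φ a b) (hφ : Integrable φ) (hc : ∀ x ∈ Ω, ContinuousAt φ x)
    (ha : ∀ x ∈ Ω, ∀ i, LHat (a i) x) (hb : ∀ x ∈ Ω, LBat b x) {η K : ES n → ℝ} (hp : Pair 0 η K) (h1 : ∫ z, η z = 1) :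
    (∀ x ∈ Ω, ContDiffAt ℝ 1 φ x) ∧ (∀ x ∈ Ω, ∀ j, LHat (pd j φ) x) ∧
      ∀ x ∈ Ω, ∀ j, Tendsto (fun t => FF φ 1 (pd j η) t x) (𝓝[>] 0) (𝓝 (pd j φ x)) := by
  have hr : ∀ x ∈ Ω, ∀ j, Rate φ 1 (pd j η) x := fun x hx j =>
    rate1 hΩ hw hφ (hp.pd j) hx (ha x hx) (hb x hx)
  have hl : ∀ x ∈ Ω, ∀ j, LHat (Lm φ 1 (pd j η)) x := fun x hx j => (hr x hx j).lh hφ (hp.kP.pd j)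
  have hd : ∀ x ∈ Ω, HasFDerivAt φ (∑ j, Lm φ 1 (pd j η) x • (EuclideanSpace.proj j : ES n →L[ℝ] ℝ)) x := by
    intro x hx
    obtain ⟨r, hr0, hrs⟩ := Metric.isOpen_iff.1 hΩ x hx
    exact deriv_of_rate (m := 0) hφ hp.kP hr0 (fun y hy => FF_tendsto_of_cont hφ hp.kP h1 (hc y (hrs hy))) (hr x hx)
  have hC := c1_of hΩ hd (m := 0) (by
    intro x hx j
    have : ContDiffAt ℝ 0 (Lm φ 1 (pd j η)) x := by
      rw [contDiffAt_zero]
      exact ⟨Ω, hΩ.mem_nhds hx, fun y hy => (hl y hy j).continuousAt.continuousWithinAt⟩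
    exact_mod_cast this)
  refine ⟨fun x hx => by simpa using hC.1 x hx, fun x hx j => ?_, fun x hx j => ?_⟩
  · refine (hl x hx j).congr ?_
    filter_upwards [hΩ.mem_nhds hx] with y hy using (hC.2 y hy j).symm
  · rw [hC.2 x hx j]
    obtain ⟨ρ, α, C, hρ, -, -, h2⟩ := hr x hx j
    exact (h2 x (Metric.mem_ball_self hρ)).1

lemma reg2 {n : ℕ} {Ω : Set (ES n)} (hΩ : IsOpen Ω) {φ : ES n → ℝ} {b : ES n → ℝ}
    (hw : WeakEq Ω φ (fun _ _ => 0) b) (hφ : Integrable φ) (hc : ∀ x ∈ Ω, ContinuousAt φ x)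
    (hb : ∀ x ∈ Ω, LHat b x) : ∀ x ∈ Ω, ContDiffAt ℝ 2 φ x := by
  obtain ⟨η, K, hp, h1⟩ := exists_pair n
  obtain ⟨hc1, -, ht⟩ := reg1 hΩ hw hφ hc (fun x _ _ => LHat.const 0 x) (fun x hx => (hb x hx).bdd) hp h1
  have hr : ∀ x ∈ Ω, ∀ j k, Rate φ 2 (pd k (pd j η)) x := fun x hx j k =>
    rate2 hΩ hw hφ ((hp.pd j).pd k) ((hp.kS.pd j).int_pd k) hx (hb x hx)
  have hl : ∀ x ∈ Ω, ∀ j k, LHat (Lm φ 2 (pd k (pd j η))) x := fun x hx j k =>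
    (hr x hx j k).lh hφ ((hp.kP.pd j).pd k)
  have hd : ∀ j, ∀ x ∈ Ω, HasFDerivAt (pd j φ)
      (∑ k, Lm φ 2 (pd k (pd j η)) x • (EuclideanSpace.proj k : ES n →L[ℝ] ℝ)) x := by
    intro j x hx
    obtain ⟨r, hr0, hrs⟩ := Metric.isOpen_iff.1 hΩ x hx
    exact deriv_of_rate (m := 1) hφ (hp.kP.pd j) hr0 (fun y hy => ht y (hrs hy) j) (hr x hx j)
  have hC : ∀ j, ∀ x ∈ Ω, ContDiffAt ℝ 1 (pd j φ) x := fun j => by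
    have := c1_of hΩ (hd j) (m := 0) (by
      intro x hx k
      have : ContDiffAt ℝ 0 (Lm φ 2 (pd k (pd j η))) x := by
        rw [contDiffAt_zero]
        exact ⟨Ω, hΩ.mem_nhds hx, fun y hy => (hl y hy j k).continuousAt.continuousWithinAt⟩
      exact_mod_cast this)
    intro x hx
    simpa using this.1 x hx
  have hD : ∀ x ∈ Ω, HasFDerivAt φ (∑ j, pd j φ x • (EuclideanSpace.proj j : ES n →L[ℝ] ℝ)) x := by
    intro x hx
    have := ((hc1 x hx).differentiableAt (by simp)).hasFDerivAt
    have e : fderiv ℝ φ x = ∑ j, pd j φ x • (EuclideanSpace.proj j : ES n →L[ℝ] ℝ) := by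
      refine ContinuousLinearMap.ext fun v => ?_
      rw [fderiv_eq_sum]
      simp [mul_comm]
    rwa [e] at this
  have := (c1_of hΩ hD (m := 1) fun x hx j => by simpa using hC j x hx).1
  intro x hx
  simpa using this x hx

lemma regA {n : ℕ} {Ω : Set (ES n)} (hΩ : IsOpen Ω) {u : ES n → ES n}
    (hu : ∀ x ∈ Ω, ContDiffAt ℝ 1 u x) {φ h : ES n → ℝ} (hφ : Integrable φ)
    (h0 : ∀ x, x ∉ Ω → φ x = 0) (hφb : ∀ x ∈ Ω, LBat φ x) (hhb : ∀ x ∈ Ω, LBat h x)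
    (hh : ∀ ψ, IsTest Ω ψ → Integrable (fun x => h x * ψ x))
    (hw : ∀ ψ, IsTest Ω ψ → ∫ x, φ x * Ladj u ψ x = - ∫ x, h x * ψ x) :
    ∃ φ' : ES n → ℝ, φ' =ᵐ[volume] φ ∧ Measurable φ' ∧ (∀ x, x ∉ Ω → φ' x = 0) ∧
      (∀ x ∈ Ω, ContDiffAt ℝ 1 φ' x) ∧ ∀ x ∈ Ω, ∀ j, LHat (pd j φ') x := by
  have bm : ∀ {f g : ES n → ℝ} {x : ES n}, LBat f x → LBat g x → LBat (fun x => f x * g x) x := by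
    rintro f g x ⟨r, M, hr, h1⟩ ⟨r', M', hr', h2⟩
    refine ⟨min r r', M * M', lt_min hr hr', fun y hy => ?_⟩
    have a1 := h1 y (Metric.ball_subset_ball (min_le_left _ _) hy)
    have a2 := h2 y (Metric.ball_subset_ball (min_le_right _ _) hy)
    rw [abs_mul]
    exact mul_le_mul a1 a2 (abs_nonneg _) ((abs_nonneg _).trans a1)
  have ba : ∀ {f g : ES n → ℝ} {x : ES n}, LBat f x → LBat g x → LBat (fun x => -(f x + g x)) x := by
    rintro f g x ⟨r, M, hr, h1⟩ ⟨r', M', hr', h2⟩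
    refine ⟨min r r', M + M', lt_min hr hr', fun y hy => ?_⟩
    have a1 := h1 y (Metric.ball_subset_ball (min_le_left _ _) hy)
    have a2 := h2 y (Metric.ball_subset_ball (min_le_right _ _) hy)
    rw [abs_neg]
    exact (abs_add_le _ _).trans (add_le_add a1 a2)
  have hui : ∀ x ∈ Ω, ∀ i, LHat (fun x => u x i) x := fun x hx i => LHat.of_C1 (cda_coord (hu x hx) i)
  have hdv : ∀ x ∈ Ω, LBat (dvg u) x := fun x hx =>
    LBat.of_continuousAt ((dvg_cont hu).continuousAt (hΩ.mem_nhds hx))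
  obtain ⟨φ', hae, hm, h0', hl⟩ := reg0 hΩ (weakEq_of_Ladj hΩ hu hφ hh hw) hφ h0
    (fun x hx i => bm (hφb x hx) (hui x hx i).bdd) (fun x hx => ba (bm (hφb x hx) (hdv x hx)) (hhb x hx))
  have hφ' : Integrable φ' := hφ.congr hae.symm
  have hw' := ladj_congr (Ω := Ω) hae (h' := h) (ae_of_all _ fun _ _ => rfl) hw
  obtain ⟨η, K, hp, h1⟩ := exists_pair n
  obtain ⟨r1, r2, -⟩ := reg1 hΩ (weakEq_of_Ladj hΩ hu hφ' hh hw') hφ' (fun x hx => (hl x hx).continuousAt)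
    (fun x hx i => (hl x hx).mul (hui x hx i)) (fun x hx => ba (bm (hl x hx).bdd (hdv x hx)) (hhb x hx)) hp h1
  exact ⟨φ', hae, hm, h0', r1, r2⟩

lemma eq_of_weak {n : ℕ} {Ω : Set (ES n)} (hΩ : IsOpen Ω) {f g : ES n → ℝ} (hf : ContinuousOn f Ω)
    (hg : ContinuousOn g Ω) (h : ∀ ψ, IsTest Ω ψ → ∫ x, f x * ψ x = ∫ x, g x * ψ x) :
    ∀ x ∈ Ω, f x = g x := by
  have h1 : ∀ᵐ x, x ∈ Ω → (fun x => f x - g x) x = 0 := by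
    refine hΩ.ae_eq_zero_of_integral_contDiff_smul_eq_zero ((hf.sub hg).locallyIntegrableOn hΩ.measurableSet) ?_
    intro ψ hψ hc hs
    have ht : IsTest Ω ψ := ⟨hψ, hc, hs⟩
    have e : ∀ x, ψ x • (fun x => f x - g x) x = f x * ψ x - g x * ψ x := fun x => by
      simp only [smul_eq_mul]; ring
    simp only [e]
    rw [integral_sub (int_mul hΩ hf ht) (int_mul hΩ hg ht), h ψ ht, sub_self]
  have h2 : f =ᵐ[volume.restrict Ω] g := by
    rw [Filter.EventuallyEq, ae_restrict_iff' hΩ.measurableSet]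
    filter_upwards [h1] with x hx h using sub_eq_zero.1 (hx h)
  exact Measure.eqOn_open_of_ae_eq h2 hΩ hf hg

lemma le_of_ae {n : ℕ} {Ω : Set (ES n)} (hΩ : IsOpen Ω) {f g : ES n → ℝ} (hf : ContinuousOn f Ω)
    (hg : ContinuousOn g Ω) (h : ∀ᵐ x, x ∈ Ω → f x ≤ g x) : ∀ x ∈ Ω, f x ≤ g x := by
  have h2 : (fun x => min (f x) (g x)) =ᵐ[volume.restrict Ω] f := by
    rw [Filter.EventuallyEq, ae_restrict_iff' hΩ.measurableSet]
    filter_upwards [h] with x hx h using min_eq_left (hx h)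
  intro x hx
  have := Measure.eqOn_open_of_ae_eq h2 hΩ (hf.inf hg) hf hx
  exact min_eq_left_iff.1 this

lemma regB {n : ℕ} {Ω : Set (ES n)} (hΩ : IsOpen Ω) {u : ES n → ES n}
    (hu : ∀ x ∈ Ω, ContDiffAt ℝ 1 u x) {φ h : ES n → ℝ} (hφ : Integrable φ)
    (hφ1 : ∀ x ∈ Ω, ContDiffAt ℝ 1 φ x) (hφl : ∀ x ∈ Ω, ∀ j, LHat (pd j φ) x) (hhl : ∀ x ∈ Ω, LHat h x)
    (hw : ∀ ψ, IsTest Ω ψ → ∫ x, φ x * Ladj u ψ x = - ∫ x, h x * ψ x) :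
    (∀ x ∈ Ω, ContDiffAt ℝ 2 φ x) ∧ ∀ x ∈ Ω, -lapl φ x + fderiv ℝ φ x (u x) = h x := by
  have hhc : ContinuousOn h Ω := fun x hx => (hhl x hx).continuousAt.continuousWithinAt
  have hW : WeakEq Ω φ (fun _ _ => 0) (fun x => fderiv ℝ φ x (u x) + (-1) * h x) := by
    intro ψ hψ
    have i1 := int_mul hΩ (drift_cont hu hφ1) hψ
    have i2 := int_mul hΩ hhc hψ
    have i3 := int_cs hφ (Ladj_cont hΩ hu hψ) (Ladj_cs (u := u) hψ)
    have c4 : ContinuousOn (fun x => fderiv ℝ ψ x (u x) + dvg u x * ψ x) Ω :=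
      (drift_cont hu (fun x _ => (hψ.cda2 x).of_le (by norm_num))).add
        ((dvg_cont hu).mul hψ.smooth.continuous.continuousOn)
    have e1 : ∀ x, φ x * Ladj u ψ x = φ x * lapl ψ x + φ x * (fderiv ℝ ψ x (u x) + dvg u x * ψ x) := by
      intro x; unfold Ladj; ring
    have i5 : Integrable (fun x => φ x * lapl ψ x) := by
      have : lapl ψ = fun x => ∑ i, pd i (pd i ψ) x := rfl
      simp only [this, Finset.mul_sum]
      exact integrable_finsetSum _ fun i _ =>
        int_cs hφ ((hψ.pd i).pd i).smooth.continuous ((hψ.pd i).pd i).cs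
    have i4 : Integrable (fun x => φ x * (fderiv ℝ ψ x (u x) + dvg u x * ψ x)) := by
      refine (i3.sub i5).congr (ae_of_all _ fun x => ?_)
      simp only [Pi.sub_apply, e1]; ring
    have h1 := hw ψ hψ
    simp only [e1] at h1
    rw [integral_add i5 i4, ibp_drift hΩ hu hφ1 hψ] at h1
    have e2 : ∀ x, (fderiv ℝ φ x (u x) + (-1) * h x) * ψ x = fderiv ℝ φ x (u x) * ψ x - h x * ψ x :=
      fun x => by ring
    simp only [e2]
    rw [integral_sub i1 i2]
    simp only [zero_mul, integral_zero, Finset.sum_const_zero]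
    linarith
  have hdl : ∀ x ∈ Ω, LHat (fun x => fderiv ℝ φ x (u x) + (-1) * h x) x := by
    intro x hx
    refine LHat.add ?_ ((LHat.const (-1) x).mul (hhl x hx))
    simp only [fderiv_eq_sum]
    exact LHat.sum _ fun i => (LHat.of_C1 (cda_coord (hu x hx) i)).mul (hφl x hx i)
  have h2 := reg2 hΩ hW hφ (fun x hx => (hφ1 x hx).continuousAt) hdl
  refine ⟨h2, eq_of_weak hΩ ((lapl_cont h2).neg.add (drift_cont hu hφ1)) hhc fun ψ hψ => ?_⟩
  have a := hw ψ hψ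
  rw [ibp_Ladj hΩ hu h2 hψ] at a
  linarith

lemma int_bdd {n : ℕ} {Ω : Set (ES n)} (hΩ : IsOpen Ω) (hb : Bornology.IsBounded Ω) {φ : ES n → ℝ}
    (hm : Measurable φ) (h0 : ∀ x, x ∉ Ω → φ x = 0) {M : ℝ} (hM : ∀ x ∈ Ω, |φ x| ≤ M) : Integrable φ := by
  have h1 : IntegrableOn φ Ω :=
    Measure.integrableOn_of_bounded hb.measure_lt_top.ne hm.aestronglyMeasurable
      ((ae_restrict_iff' hΩ.measurableSet).2 (ae_of_all _ hM))
  rwa [integrableOn_iff_integrable_of_support_subset] at h1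
  intro x hx
  by_contra h
  exact hx (h0 x h)

lemma cont_closure {n : ℕ} {Ω : Set (ES n)} (hΩ : IsOpen Ω) {φ τ : ES n → ℝ} (hτc : ContinuousOn τ (closure Ω))
    (hτf : ∀ x ∈ frontier Ω, τ x = 0) (h0 : ∀ x, x ∉ Ω → φ x = 0) (hc : ∀ x ∈ Ω, ContinuousAt φ x) {c : ℝ}
    (hφ : ∀ x ∈ Ω, 0 ≤ φ x ∧ φ x ≤ c * τ x) : ContinuousOn φ (closure Ω) := by
  intro x hx
  by_cases hxΩ : x ∈ Ω
  · exact (hc x hxΩ).continuousWithinAt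
  have hf : x ∈ frontier Ω := by rw [hΩ.frontier_eq]; exact ⟨hx, hxΩ⟩
  rw [ContinuousWithinAt, h0 x hxΩ]
  have h2 : Tendsto (fun y => c * τ y) (𝓝[closure Ω] x) (𝓝 0) := by
    have := ((hτc x hx).const_mul c).tendsto
    simpa [hτf x hf] using this
  refine squeeze_zero' ?_ ?_ h2
  · filter_upwards with y
    by_cases hy : y ∈ Ω
    · exact (hφ y hy).1
    · rw [h0 y hy]
  · filter_upwards [self_mem_nhdsWithin] with y hyc
    by_cases hy : y ∈ Ω
    · exact (hφ y hy).2
    · rw [h0 y hy, hτf y (by rw [hΩ.frontier_eq]; exact ⟨hyc, hy⟩), mul_zero]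

lemma core {n : ℕ} {Ω : Set (ES n)} (hΩ : IsOpen Ω) (hb : Bornology.IsBounded Ω) {u : ES n → ES n}
    (hu : ∀ x ∈ Ω, ContDiffAt ℝ 1 u x) {τ : ES n → ℝ} (hτ : ∀ x ∈ Ω, ContDiffAt ℝ 2 τ x)
    (hτc : ContinuousOn τ (closure Ω))
    (hτf : ∀ x ∈ frontier Ω, τ x = 0) {M B : ℝ} (hB : ∀ x ∈ Ω, M * τ x ≤ B)
    {φ : ES n → ℝ} (hm : Measurable φ) (h0 : ∀ x, x ∉ Ω → φ x = 0)
    (hφ : ∀ x ∈ Ω, 0 ≤ φ x ∧ φ x ≤ M * τ x) (H : (ES n → ℝ) → ES n → ℝ)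
    (hHb : ∀ x ∈ Ω, LBat (H φ) x) (hHi : ∀ ψ, IsTest Ω ψ → Integrable (fun x => H φ x * ψ x))
    (hHa : ∀ φ' : ES n → ℝ, φ' =ᵐ[volume] φ → ∀ᵐ x, x ∈ Ω → H φ' x = H φ x)
    (hHc : ∀ φ' : ES n → ℝ, (∀ x ∈ Ω, ContDiffAt ℝ 1 φ' x) → ∀ x ∈ Ω, LHat (H φ') x)
    (hw : ∀ ψ, IsTest Ω ψ → ∫ x, φ x * Ladj u ψ x = - ∫ x, H φ x * ψ x) :
    ∃ φ' : ES n → ℝ, φ' =ᵐ[volume] φ ∧ (∀ x, x ∉ Ω → φ' x = 0) ∧ (∀ x ∈ Ω, ContDiffAt ℝ 2 φ' x) ∧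
      ContinuousOn φ' (closure Ω) ∧ (∀ x ∈ Ω, 0 ≤ φ' x ∧ φ' x ≤ M * τ x) ∧
      ∀ x ∈ Ω, -lapl φ' x + fderiv ℝ φ' x (u x) = H φ' x := by
  have hbd : ∀ x ∈ Ω, |φ x| ≤ B := fun x hx => by
    rw [abs_of_nonneg (hφ x hx).1]; exact (hφ x hx).2.trans (hB x hx)
  have hi : Integrable φ := int_bdd hΩ hb hm h0 hbd
  have hL : ∀ x ∈ Ω, LBat φ x := fun x hx => by
    obtain ⟨r, hr, hrs⟩ := Metric.isOpen_iff.1 hΩ x hx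
    exact ⟨r, B, hr, fun y hy => hbd y (hrs hy)⟩
  obtain ⟨φ', hae, hm', h0', hc1, hl⟩ := regA hΩ hu hi h0 hL hHb hHi hw
  obtain ⟨hc2, heq⟩ := regB hΩ hu (hi.congr hae.symm) hc1 hl (hHc φ' hc1) (ladj_congr hae (hHa φ' hae) hw)
  have hbd' : ∀ x ∈ Ω, 0 ≤ φ' x ∧ φ' x ≤ M * τ x := by
    have c1 := cont_of_cda hc1
    intro x hx
    refine ⟨le_of_ae hΩ continuousOn_const c1 ?_ x hx,
      le_of_ae hΩ c1 (continuousOn_const.mul (cont_of_cda hτ)) ?_ x hx⟩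
    · filter_upwards [hae] with y hy h; rw [hy]; exact (hφ y h).1
    · filter_upwards [hae] with y hy h; rw [hy]; exact (hφ y h).2
  exact ⟨φ', hae, h0', hc2, cont_closure hΩ hτc hτf h0' (fun x hx => (hc1 x hx).continuousAt) hbd', hbd', heq⟩

lemma compar {n : ℕ} {Ω : Set (ES n)} (hΩ : IsOpen Ω) (hb : Bornology.IsBounded Ω)
    (u : ES n → ES n) {τ : ES n → ℝ} (hτ : ∀ x ∈ Ω, ContDiffAt ℝ 2 τ x)
    (hτc : ContinuousOn τ (closure Ω)) (hτf : ∀ x ∈ frontier Ω, τ x = 0)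
    (hτL : ∀ x ∈ Ω, -lapl τ x + fderiv ℝ τ x (u x) = 1)
    {v w : ES n → ℝ} (hv : ∀ x ∈ Ω, ContDiffAt ℝ 2 v x) (hw : ∀ x ∈ Ω, ContDiffAt ℝ 2 w x)
    (hvc : ContinuousOn v (closure Ω)) (hwc : ContinuousOn w (closure Ω))
    (hvf : ∀ x ∈ frontier Ω, v x = 0) (hwf : ∀ x ∈ frontier Ω, w x = 0)
    (hL : ∀ x ∈ Ω, -lapl v x + fderiv ℝ v x (u x) ≤ -lapl w x + fderiv ℝ w x (u x)) :
    ∀ x ∈ Ω, v x ≤ w x := by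
  intro x hx
  have := min_principle hΩ hb u hτ hτc hτf hτL (w := fun y => w y + (-1) * v y)
    (fun y hy => (hw y hy).add (contDiffAt_const.mul (hv y hy)))
    (hwc.add (continuousOn_const.mul hvc)) (fun y hy => by simp [hvf y hy, hwf y hy]) (fun y hy => by
      rw [lapl_add (hw y hy) (contDiffAt_const.mul (hv y hy)), lapl_const_mul (-1) (hv y hy),
        fderiv_add_mul (-1) ((hw y hy).differentiableAt (by simp)) ((hv y hy).differentiableAt (by simp))]
      have := hL y hy
      linarith) x hx
  linarith

lemma final {n : ℕ} {Ω : Set (ES n)} (hΩ : IsOpen Ω) (hb : Bornology.IsBounded Ω) {u : ES n → ES n}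
    (hu : ∀ x ∈ Ω, ContDiffAt ℝ 1 u x) {τ : ES n → ℝ} (hτ : ∀ x ∈ Ω, ContDiffAt ℝ 2 τ x)
    (hτc : ContinuousOn τ (closure Ω)) (hτf : ∀ x ∈ frontier Ω, τ x = 0)
    (hτL : ∀ x ∈ Ω, -lapl τ x + fderiv ℝ τ x (u x) = 1)
    {θ : ℝ} (hθ0 : 0 < θ) (hθ : ∀ x ∈ Ω, τ x ≤ θ) {g : ℝ → ℝ} (hg : ContDiff ℝ 2 g) (hg0 : 0 < g 0)
    (hgm : MonotoneOn g (Ici 0)) {lam : ℝ} (hlam : 0 < lam) (hl : lam * g 1 ≤ θ⁻¹) :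
    ∃ φ : ES n → ℝ, (∀ x ∈ Ω, ContDiffAt ℝ 2 φ x) ∧ ContinuousOn φ (closure Ω) ∧
      (∀ x ∈ Ω, -lapl φ x + fderiv ℝ φ x (u x) = lam * g (φ x)) ∧ (∀ x ∈ frontier Ω, φ x = 0) ∧
      (∀ x ∈ Ω, 0 ≤ φ x) ∧
      ∀ v : ES n → ℝ, (∀ x ∈ Ω, ContDiffAt ℝ 2 v x) → ContinuousOn v (closure Ω) →
        (∀ x ∈ Ω, -lapl v x + fderiv ℝ v x (u x) = lam * g (v x)) → (∀ x ∈ frontier Ω, v x = 0) →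
        (∀ x ∈ Ω, 0 ≤ v x) → ∀ x ∈ Ω, φ x ≤ v x := by
  have hg1 : ContDiff ℝ 1 g := hg.of_le (by norm_num)
  have hτ0 : ∀ x ∈ Ω, 0 ≤ τ x := min_principle_strict hΩ hb u hτ hτc (fun x hx => (hτf x hx).ge)
    fun x hx => by rw [hτL x hx]; exact one_pos
  have hM0 : 0 ≤ θ⁻¹ := (inv_pos.2 hθ0).le
  have hB : ∀ x ∈ Ω, θ⁻¹ * τ x ≤ 1 := fun x hx => by
    rw [inv_mul_le_iff₀ hθ0, mul_one]; exact hθ x hx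
  have hgb : ∀ s, 0 ≤ s → s ≤ 1 → 0 ≤ lam * g s ∧ lam * g s ≤ lam * g 1 := fun s h0 h1 =>
    ⟨mul_nonneg hlam.le (hg0.le.trans (hgm (mem_Ici.2 le_rfl) (mem_Ici.2 h0) h0)),
      mul_le_mul_of_nonneg_left (hgm (mem_Ici.2 h0) (mem_Ici.2 zero_le_one) h1) hlam.le⟩
  have hnf : ∀ x ∈ frontier Ω, x ∉ Ω := fun x hx => by rw [hΩ.frontier_eq] at hx; exact hx.2
  let Good : (ES n → ℝ) → Prop := fun φ => (∀ x ∈ Ω, ContDiffAt ℝ 2 φ x) ∧ ContinuousOn φ (closure Ω) ∧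
    (∀ x, x ∉ Ω → φ x = 0) ∧ ∀ x ∈ Ω, 0 ≤ φ x ∧ φ x ≤ θ⁻¹ * τ x
  have good0 : Good fun _ => 0 := ⟨fun x _ => contDiffAt_const, continuousOn_const, fun _ _ => rfl,
    fun x hx => ⟨le_rfl, mul_nonneg hM0 (hτ0 x hx)⟩⟩
  have gb : ∀ φ, Good φ → ∀ x, 0 ≤ φ x ∧ φ x ≤ 1 := by
    rintro φ ⟨-, -, h1, h2⟩ x
    by_cases hx : x ∈ Ω
    · exact ⟨(h2 x hx).1, (h2 x hx).2.trans (hB x hx)⟩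
    · rw [h1 x hx]; exact ⟨le_rfl, zero_le_one⟩
  have step : ∀ φ : {φ // Good φ}, ∃ φ' : {φ // Good φ},
      ∀ x ∈ Ω, -lapl φ'.1 x + fderiv ℝ φ'.1 x (u x) = lam * g (φ.1 x) := by
    rintro ⟨φ, hφ⟩
    have hh1 : ∀ x ∈ Ω, ContDiffAt ℝ 1 (fun x => lam * g (φ x)) x := fun x hx =>
      contDiffAt_const.mul (hg1.contDiffAt.comp x ((hφ.1 x hx).of_le (by norm_num)))
    have hhc := cont_of_cda hh1
    obtain ⟨w, hwm, hw0, hwb, hw⟩ := exists_weak hΩ hb hu hτ hτ0 hθ hτL hhc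
      (fun x _ => (hgb _ (gb φ hφ x).1 (gb φ hφ x).2).1)
      (fun x _ => (hgb _ (gb φ hφ x).1 (gb φ hφ x).2).2.trans hl) hM0
    obtain ⟨φ', -, a2, a3, a4, a5, a6⟩ := core hΩ hb hu hτ hτc hτf hB hwm hw0 hwb
      (fun _ x => lam * g (φ x)) (fun x hx => LBat.of_continuousAt (hh1 x hx).continuousAt)
      (fun ψ hψ => int_mul hΩ hhc hψ) (fun _ _ => ae_of_all _ fun _ _ => rfl)
      (fun _ _ x hx => LHat.of_C1 (hh1 x hx)) hw
    exact ⟨⟨φ', a3, a4, a2, a5⟩, a6⟩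
  choose next hnext using step
  let F : ℕ → {φ // Good φ} := fun k => Nat.rec ⟨fun _ => 0, good0⟩ (fun _ p => next p) k
  have hF0 : ∀ x, (F 0).1 x = 0 := fun x => rfl
  have hFs : ∀ k, ∀ x ∈ Ω, -lapl (F (k+1)).1 x + fderiv ℝ (F (k+1)).1 x (u x) = lam * g ((F k).1 x) :=
    fun k => hnext (F k)
  clear_value F
  have hFb : ∀ k x, 0 ≤ (F k).1 x ∧ (F k).1 x ≤ 1 := fun k => gb _ (F k).2
  have hFf : ∀ k, ∀ x ∈ frontier Ω, (F k).1 x = 0 := fun k x hx => (F k).2.2.2.1 x (hnf x hx)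
  have hmono1 : ∀ k, ∀ x ∈ Ω, (F k).1 x ≤ (F (k+1)).1 x := by
    intro k
    induction k with
    | zero => intro x _; rw [hF0]; exact (hFb 1 x).1
    | succ k ih =>
      refine compar hΩ hb u hτ hτc hτf hτL (F _).2.1 (F _).2.1 (F _).2.2.1 (F _).2.2.1 (hFf _) (hFf _) ?_
      intro x hx
      rw [hFs, hFs _ x hx]
      · exact mul_le_mul_of_nonneg_left (hgm (hFb k x).1 (hFb (k+1) x).1 (ih x hx)) hlam.le
      · exact hx
  have hmono : ∀ x, Monotone fun k => (F k).1 x := by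
    intro x
    refine monotone_nat_of_le_succ fun k => ?_
    by_cases hx : x ∈ Ω
    · exact hmono1 k x hx
    · rw [(F k).2.2.2.1 x hx, (F (k+1)).2.2.2.1 x hx]
  set φ : ES n → ℝ := fun x => ⨆ k, (F k).1 x with hφd
  have hlim : ∀ x, Tendsto (fun k => (F k).1 x) atTop (𝓝 (φ x)) := fun x =>
    tendsto_atTop_ciSup (hmono x) ⟨1, by rintro _ ⟨k, rfl⟩; exact (hFb k x).2⟩
  have hφb : ∀ x, 0 ≤ φ x ∧ φ x ≤ 1 := fun x =>
    ⟨ge_of_tendsto' (hlim x) fun k => (hFb k x).1, le_of_tendsto' (hlim x) fun k => (hFb k x).2⟩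
  have hφ0 : ∀ x, x ∉ Ω → φ x = 0 := fun x hx =>
    tendsto_nhds_unique (hlim x) (by simp [(F _).2.2.2.1 x hx])
  have hφτ : ∀ x ∈ Ω, 0 ≤ φ x ∧ φ x ≤ θ⁻¹ * τ x := fun x hx =>
    ⟨(hφb x).1, le_of_tendsto' (hlim x) fun k => ((F k).2.2.2.2 x hx).2⟩
  have hFm : ∀ k, Measurable (F k).1 := by
    intro k
    have : Ω.indicator (F k).1 = (F k).1 := by
      rw [indicator_eq_self]
      intro x hx
      by_contra h
      exact hx ((F k).2.2.2.1 x h)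
    rw [← this]
    exact meas_indicator hΩ (cont_of_cda (F k).2.1)
  have hφm : Measurable φ := measurable_of_tendsto_metrizable hFm (tendsto_pi_nhds.2 hlim)
  have hgφ : ∀ f : ES n → ℝ, Measurable f → Measurable fun x => lam * g (f x) := fun f hf =>
    (hg.continuous.measurable.comp hf).const_mul lam
  have hψi : ∀ ψ, IsTest Ω ψ → Integrable ψ := fun ψ hψ =>
    hψ.smooth.continuous.integrable_of_hasCompactSupport hψ.cs
  have habs : ∀ s, 0 ≤ s → s ≤ 1 → |lam * g s| ≤ lam * g 1 := fun s h0 h1 => by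
    rw [abs_of_nonneg (hgb s h0 h1).1]; exact (hgb s h0 h1).2
  have hw : ∀ ψ, IsTest Ω ψ → ∫ x, φ x * Ladj u ψ x = - ∫ x, lam * g (φ x) * ψ x := by
    intro ψ hψ
    have hk : ∀ k, ∫ x, (F (k+1)).1 x * Ladj u ψ x = - ∫ x, lam * g ((F k).1 x) * ψ x := by
      intro k
      rw [ibp_Ladj hΩ hu (F (k+1)).2.1 hψ]
      congr 1
      refine integral_congr_ae (ae_of_all _ fun x => ?_)
      by_cases hx : x ∈ Ω
      · simp only [hFs k x hx]
      · simp only [image_eq_zero_of_notMem_tsupport fun h2 => hx (hψ.sub h2), mul_zero]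
    have hLi : Integrable (Ladj u ψ) :=
      (Ladj_cont hΩ hu hψ).integrable_of_hasCompactSupport (Ladj_cs hψ)
    have t1 : Tendsto (fun k => ∫ x, (F (k+1)).1 x * Ladj u ψ x) atTop (𝓝 (∫ x, φ x * Ladj u ψ x)) := by
      refine tendsto_integral_of_dominated_convergence (fun x => |Ladj u ψ x|) ?_ hLi.abs ?_ ?_
      · exact fun k => (hFm _).aestronglyMeasurable.mul hLi.aestronglyMeasurable
      · refine fun k => ae_of_all _ fun x => ?_
        rw [Real.norm_eq_abs, abs_mul, abs_of_nonneg (hFb _ x).1]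
        exact mul_le_of_le_one_left (abs_nonneg _) (hFb _ x).2
      · exact ae_of_all _ fun x => ((tendsto_add_atTop_iff_nat 1).2 (hlim x)).mul_const _
    have t2 : Tendsto (fun k => ∫ x, lam * g ((F k).1 x) * ψ x) atTop (𝓝 (∫ x, lam * g (φ x) * ψ x)) := by
      refine tendsto_integral_of_dominated_convergence (fun x => lam * g 1 * |ψ x|) ?_
        ((hψi ψ hψ).abs.const_mul _) ?_ ?_
      · exact fun k => (hgφ _ (hFm k)).aestronglyMeasurable.mul (hψi ψ hψ).aestronglyMeasurable
      · refine fun k => ae_of_all _ fun x => ?_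
        rw [Real.norm_eq_abs, abs_mul]
        exact mul_le_mul_of_nonneg_right (habs _ (hFb k x).1 (hFb k x).2) (abs_nonneg _)
      · exact ae_of_all _ fun x => (((hg.continuous.tendsto _).comp (hlim x)).const_mul lam).mul_const _
    refine tendsto_nhds_unique t1 ?_
    simp only [hk]
    exact t2.neg
  obtain ⟨φ', hae, b0, b2, b3, b4, b5⟩ := core hΩ hb hu hτ hτc hτf hB hφm hφ0 hφτ
    (fun f x => lam * g (f x)) (fun x _ => ⟨1, lam * g 1, one_pos, fun y _ => habs _ (hφb y).1 (hφb y).2⟩)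
    (fun ψ hψ => by
      refine ((hψi ψ hψ).abs.const_mul (lam * g 1)).mono'
        ((hgφ _ hφm).aestronglyMeasurable.mul (hψi ψ hψ).aestronglyMeasurable) (ae_of_all _ fun x => ?_)
      rw [Real.norm_eq_abs, abs_mul]
      exact mul_le_mul_of_nonneg_right (habs _ (hφb x).1 (hφb x).2) (abs_nonneg _))
    (fun f hf => by filter_upwards [hf] with x hx _; simp only [hx])
    (fun f hf x hx => LHat.of_C1 (contDiffAt_const.mul (hg1.contDiffAt.comp x (hf x hx)))) hw
  refine ⟨φ', b2, b3, b5, fun x hx => b0 x (hnf x hx), fun x hx => (b4 x hx).1, ?_⟩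
  intro v v1 v2 v3 v4 v5
  have hkv : ∀ k, ∀ x ∈ Ω, (F k).1 x ≤ v x := by
    intro k
    induction k with
    | zero => intro x hx; rw [hF0]; exact v5 x hx
    | succ k ih =>
      refine compar hΩ hb u hτ hτc hτf hτL (F _).2.1 v1 (F _).2.2.1 v2 (hFf _) v4 ?_
      intro x hx
      rw [hFs _ x hx, v3 x hx]
      exact mul_le_mul_of_nonneg_left (hgm (hFb k x).1 (v5 x hx) (ih x hx)) hlam.le
  refine le_of_ae hΩ (cont_of_cda b2) (cont_of_cda v1) ?_
  filter_upwards [hae] with x hx h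
  rw [hx]
  exact le_of_tendsto' (hlim x) fun k => hkv k x h

/-- There is a constant `C > 0` depending only on the nonlinearity `g`
(not on the domain or the flow) such that whenever `τ` solves the exit-time problem
`-Δτ + ⟨u, ∇τ⟩ = 1` in `Ω`, `τ = 0` on `∂Ω`, with maximum `θ` over the closure of `Ω`,
the explosion problem admits a minimal nonnegative classical solution for every
`λ ∈ (0, C/θ]`. -/
theorem minimal_solution_below_exit_time_bound (g : ℝ → ℝ)
    (hg : ContDiff ℝ 2 g) (hg0 : 0 < g 0)
    (hgmono : StrictMonoOn g (Ici 0)) (hgconv : ConvexOn ℝ (Ici 0) g) :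
    ∃ C : ℝ, 0 < C ∧
      ∀ (n : ℕ) (Ω : Set (EuclideanSpace ℝ (Fin n))),
        IsOpen Ω → IsConnected Ω → Bornology.IsBounded Ω →
        ∀ u : EuclideanSpace ℝ (Fin n) → EuclideanSpace ℝ (Fin n),
          ContDiffOn ℝ 1 u (closure Ω) →
          ∀ τ : EuclideanSpace ℝ (Fin n) → ℝ,
            (∀ x ∈ Ω, ContDiffAt ℝ 2 τ x) →
            ContinuousOn τ (closure Ω) →
            (∀ x ∈ Ω, -lapl τ x + ⟪u x, gradient τ x⟫ = 1) →
            (∀ x ∈ frontier Ω, τ x = 0) →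
            ∀ θ : ℝ, IsGreatest (τ '' closure Ω) θ →
              ∀ lam : ℝ, 0 < lam → lam ≤ C / θ →
                ∃ φ, IsMinimalSol Ω u g lam φ := by
  have hg01 : g 0 < g 1 := hgmono (mem_Ici.2 le_rfl) (mem_Ici.2 zero_le_one) one_pos
  have hg1 : 0 < g 1 := hg0.trans hg01
  refine ⟨(g 1)⁻¹, inv_pos.2 hg1, ?_⟩
  intro n Ω hΩ _ hb u hu τ hτ hτc hτL hτf θ hθ lam hlam hle
  have hθ0 : 0 < θ := by
    by_contra! h
    have := div_nonpos_of_nonneg_of_nonpos (inv_pos.2 hg1).le h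
    linarith
  have hu' : ∀ x ∈ Ω, ContDiffAt ℝ 1 u x := fun x hx =>
    hu.contDiffAt (mem_of_superset (hΩ.mem_nhds hx) subset_closure)
  have hl : lam * g 1 ≤ θ⁻¹ := by
    calc lam * g 1 ≤ (g 1)⁻¹ / θ * g 1 := mul_le_mul_of_nonneg_right hle hg1.le
      _ = θ⁻¹ := by field_simp
  simp only [inner_grad] at hτL
  obtain ⟨φ, h1, h2, h3, h4, h5, h6⟩ := final hΩ hb hu' hτ hτc hτf hτL hθ0
    (fun x hx => hθ.2 ⟨x, subset_closure hx, rfl⟩) hg hg0 hgmono.monotoneOn hlam hl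
  refine ⟨φ, ⟨⟨h1, h2, ?_, h4⟩, h5⟩, ?_⟩
  · intro x hx
    rw [inner_grad]
    exact h3 x hx
  · rintro v ⟨⟨a1, a2, a3, a4⟩, a5⟩
    simp only [inner_grad] at a3
    exact h6 v a1 a2 a3 a4 a5
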